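/- arXiv:0805.1605 — 4 statements merged into one kernel-verified Lean document; each statement's English description precedes it below -/
import Mathlib

section
/- Let F, F', G, G' be convex bodies in ℝⁿ with int F ≠ ∅. If g_F + g_G = g_{F'} + g_{G'} and g_{F,G} = g_{F',G'}, then either (g_F = g_{F'} and g_G = g_{G'}) or (g_F = g_{G'} and g_G = g_{F'}). -/
open MeasureTheory Pointwise

/-- The covariogram of a set `K ⊆ ℝⁿ`: `g_K(x) = λ_n(K ∩ (K + x))`. -/
noncomputable def covariogram {n : ℕ} (K : Set (EuclideanSpace ℝ (Fin n)))
    (x : EuclideanSpace ℝ (Fin n)) : ℝ :=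
  (volume (K ∩ ((x + ·) '' K))).toReal

/-- The cross covariogram of sets `K, L ⊆ ℝⁿ`: `g_{K,L}(x) = λ_n(K ∩ (L + x))`. -/
noncomputable def crossCovariogram {n : ℕ} (K L : Set (EuclideanSpace ℝ (Fin n)))
    (x : EuclideanSpace ℝ (Fin n)) : ℝ :=
  (volume (K ∩ ((x + ·) '' L))).toReal

open Filter Topology

/-- Continuity of the cross covariogram measure. -/
lemma cc_continuous {n : ℕ} (K L : Set (EuclideanSpace ℝ (Fin n)))
    (hKc : IsCompact K) (hLv : Convex ℝ L) (hLc : IsCompact L) :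
    Continuous (crossCovariogram K L) := by
  have himg : ∀ x : EuclideanSpace ℝ (Fin n), (x + ·) '' L = (fun a => a - x) ⁻¹' L := by
    intro x; ext a; constructor
    · rintro ⟨b, hb, rfl⟩; simpa using hb
    · intro h; exact ⟨a - x, h, by simp⟩
  have hLm : MeasurableSet L := hLc.measurableSet
  have hm : ∀ x : EuclideanSpace ℝ (Fin n), MeasurableSet ((fun a => a - x) ⁻¹' L) :=
    fun x => (measurable_id.sub_const x) hLm
  have : IsFiniteMeasure (volume.restrict K) := ⟨by simpa using hKc.measure_lt_top⟩
  have heq : crossCovariogram K L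
      = fun x => ((volume.restrict K) ((fun a => a - x) ⁻¹' L)).toReal := by
    funext x
    rw [crossCovariogram, himg, Measure.restrict_apply (hm x), Set.inter_comm]
  rw [heq, continuous_iff_continuousAt]
  intro x
  refine (ENNReal.tendsto_toReal (measure_ne_top _ _)).comp ?_
  refine tendsto_measure_of_ae_tendsto_indicator_of_isFiniteMeasure _ (hm x) hm ?_
  have h0 : (volume : Measure (EuclideanSpace ℝ (Fin n))) ((fun a => a - x) ⁻¹' frontier L) = 0 := by
    rw [(measurePreserving_sub_right volume x).measure_preimage
      isClosed_frontier.measurableSet.nullMeasurableSet]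
    exact hLv.addHaar_frontier _
  have h1 : ∀ᵐ a ∂(volume.restrict K), a - x ∉ frontier L :=
    ae_restrict_of_ae (measure_eq_zero_iff_ae_notMem.1 h0)
  filter_upwards [h1] with a ha
  have hc : Tendsto (fun y => a - y) (𝓝 x) (𝓝 (a - x)) := by
    exact (continuous_const.sub continuous_id).tendsto x
  by_cases haL : a - x ∈ L
  · have : a - x ∈ interior L := by
      by_contra h
      exact ha ⟨subset_closure haL, h⟩
    filter_upwards [hc (isOpen_interior.mem_nhds this)] with y hy
    exact ⟨fun _ => haL, fun _ => (interior_subset : interior L ⊆ L) hy⟩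
  · have : Lᶜ ∈ 𝓝 (a - x) := hLc.isClosed.isOpen_compl.mem_nhds haL
    filter_upwards [hc this] with y hy
    exact ⟨fun h => (hy h).elim, fun h => (haL h).elim⟩

/-- The measure with density the cross covariogram. -/
noncomputable def ccMeasure {n : ℕ} (K L : Set (EuclideanSpace ℝ (Fin n))) :
    Measure (EuclideanSpace ℝ (Fin n)) :=
  volume.withDensity (fun x => ENNReal.ofReal (crossCovariogram K L x))

lemma ccMeasure_eq {n : ℕ} (K L : Set (EuclideanSpace ℝ (Fin n)))
    (hKc : IsCompact K) (hLc : IsCompact L) :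
    ccMeasure K L = (volume.restrict K) ∗ (volume.restrict (-L)) := by
  have hK := hKc.measurableSet
  have hL := hLc.measurableSet
  rw [← withDensity_indicator_one hK, ← withDensity_indicator_one hL.neg,
    conv_withDensity_eq_lconvolution (measurable_one.indicator hK)
      (measurable_one.indicator hL.neg), ccMeasure]
  congr 1
  funext x
  rw [crossCovariogram, ENNReal.ofReal_toReal
    ((measure_mono Set.inter_subset_left).trans_lt hKc.measure_lt_top).ne, lconvolution_def]
  have himg : (x + ·) '' L = (fun a => a - x) ⁻¹' L := by
    ext a; constructor
    · rintro ⟨b, hb, rfl⟩; simpa using hb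
    · intro h; exact ⟨a - x, h, by simp⟩
  have hKL : MeasurableSet (K ∩ (fun a => a - x) ⁻¹' L) :=
    hK.inter ((measurable_id.sub_const x) hL)
  rw [himg, ← lintegral_indicator_one hKL]
  congr 1
  funext a
  have : (-a + x ∈ -L) ↔ a - x ∈ L := by
    rw [Set.mem_neg, neg_add, neg_neg, sub_eq_add_neg]
  by_cases h1 : a ∈ K <;> by_cases h2 : a - x ∈ L <;> simp [Set.indicator, h1, h2, this]

lemma ccMeasure_finite {n : ℕ} (K L : Set (EuclideanSpace ℝ (Fin n)))
    (hKc : IsCompact K) (hLc : IsCompact L) : IsFiniteMeasure (ccMeasure K L) := by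
  have : IsFiniteMeasure (volume.restrict K) := ⟨by simpa using hKc.measure_lt_top⟩
  have : IsFiniteMeasure (volume.restrict (-L)) := ⟨by
    rw [Measure.restrict_apply_univ]; exact hLc.neg.measure_lt_top⟩
  rw [ccMeasure_eq K L hKc hLc]
  infer_instance

lemma charFun_restrict_neg {n : ℕ} (L : Set (EuclideanSpace ℝ (Fin n)))
    (t : EuclideanSpace ℝ (Fin n)) :
    charFun (volume.restrict (-L)) t = charFun (volume.restrict L) (-t) := by
  rw [charFun_apply, charFun_apply]
  have := (Measure.measurePreserving_neg
    (volume : Measure (EuclideanSpace ℝ (Fin n)))).setIntegral_preimage_emb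
    (MeasurableEquiv.neg (EuclideanSpace ℝ (Fin n))).measurableEmbedding
    (fun x => Complex.exp (((inner ℝ x (-t) : ℝ) : ℂ) * Complex.I)) L
  rw [← this]
  simp

lemma charFun_ccMeasure {n : ℕ} (K L : Set (EuclideanSpace ℝ (Fin n)))
    (hKc : IsCompact K) (hLc : IsCompact L) (t : EuclideanSpace ℝ (Fin n)) :
    charFun (ccMeasure K L) t
      = charFun (volume.restrict K) t * charFun (volume.restrict L) (-t) := by
  have : IsFiniteMeasure (volume.restrict K) := ⟨by simpa using hKc.measure_lt_top⟩
  have : IsFiniteMeasure (volume.restrict (-L)) := ⟨by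
    rw [Measure.restrict_apply_univ]; exact hLc.neg.measure_lt_top⟩
  rw [ccMeasure_eq K L hKc hLc, charFun_conv, charFun_restrict_neg]

/-- The characteristic function of a compact set is analytic along lines. -/
lemma charFun_line_analytic {n : ℕ} (K : Set (EuclideanSpace ℝ (Fin n)))
    (hKc : IsCompact K) (x₀ w : EuclideanSpace ℝ (Fin n)) :
    AnalyticOnNhd ℝ (fun t : ℝ => charFun (volume.restrict K) (x₀ + t • w)) Set.univ := by
  have : IsFiniteMeasure (volume.restrict K) := ⟨by simpa using hKc.measure_lt_top⟩
  set Φ : ℂ → EuclideanSpace ℝ (Fin n) → ℂ := fun z x =>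
    Complex.exp ((((inner ℝ x x₀ : ℝ) : ℂ) + z * ((inner ℝ x w : ℝ) : ℂ)) * Complex.I) with hΦ
  obtain ⟨C, hC⟩ : ∃ C, ∀ x ∈ K, ‖(inner ℝ x w : ℝ)‖ ≤ C :=
    hKc.exists_bound_of_continuousOn (by fun_prop)
  have hcont : ∀ z, Continuous (Φ z) := fun z => by simp only [hΦ]; fun_prop
  have hd : Differentiable ℂ (fun z => ∫ x, Φ z x ∂(volume.restrict K)) := by
    intro z₀
    refine (hasDerivAt_integral_of_dominated_loc_of_deriv_le
      (F' := fun z x => Φ z x * (((inner ℝ x w : ℝ) : ℂ) * Complex.I))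
      (bound := fun _ => Real.exp ((‖z₀‖ + 1) * C) * C)
      (Metric.ball_mem_nhds z₀ one_pos)
      (Eventually.of_forall fun z => (hcont z).aestronglyMeasurable) ?_ ?_ ?_ ?_ ?_).2.differentiableAt
    · exact (hcont z₀).continuousOn.integrableOn_compact hKc
    · exact ((hcont z₀).mul (by fun_prop)).aestronglyMeasurable
    · refine (ae_restrict_iff' hKc.measurableSet).2 (Eventually.of_forall fun x hx z hz => ?_)
      have hx' := hC x hx
      have hz' : ‖z‖ ≤ ‖z₀‖ + 1 := by
        have h1 : ‖z - z₀‖ < 1 := by simpa [dist_eq_norm] using hz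
        have h2 : ‖z‖ ≤ ‖z - z₀‖ + ‖z₀‖ := by simpa using norm_add_le (z - z₀) z₀
        linarith
      rw [norm_mul, norm_mul, Complex.norm_I, mul_one, Complex.norm_real]
      have hC0 : 0 ≤ C := (norm_nonneg _).trans hx'
      refine mul_le_mul ?_ hx' (norm_nonneg _) (Real.exp_pos _).le
      simp only [hΦ, Complex.norm_exp]
      refine Real.exp_le_exp.2 ?_
      have : ((((inner ℝ x x₀ : ℝ) : ℂ) + z * ((inner ℝ x w : ℝ) : ℂ)) * Complex.I).re
          = - (z.im * (inner ℝ x w : ℝ)) := by simp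
      rw [this]
      calc - (z.im * (inner ℝ x w : ℝ)) ≤ |z.im * (inner ℝ x w : ℝ)| := neg_le_abs _
        _ = |z.im| * |(inner ℝ x w : ℝ)| := abs_mul _ _
        _ ≤ (‖z₀‖ + 1) * C := mul_le_mul ((Complex.abs_im_le_norm z).trans hz') hx'
            (abs_nonneg _) (by positivity)
    · exact integrable_const _
    · refine Eventually.of_forall fun x z _ => ?_
      have h1 : HasDerivAt (fun z : ℂ => (((inner ℝ x x₀ : ℝ) : ℂ)
          + z * ((inner ℝ x w : ℝ) : ℂ)) * Complex.I) (((inner ℝ x w : ℝ) : ℂ) * Complex.I) z := by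
        simpa using (((hasDerivAt_id z).mul_const ((inner ℝ x w : ℝ) : ℂ)).const_add
          ((inner ℝ x x₀ : ℝ) : ℂ)).mul_const Complex.I
      exact h1.cexp
  intro t _
  have h1 : AnalyticAt ℝ (fun z => ∫ x, Φ z x ∂(volume.restrict K)) (Complex.ofRealCLM t) :=
    (hd.analyticAt _).restrictScalars
  have h2 := h1.comp (Complex.ofRealCLM.analyticAt t)
  convert h2 using 1
  funext s
  simp only [charFun_apply, Function.comp, hΦ, inner_add_right, inner_smul_right]
  simp

lemma cc_eq_of_charFun {n : ℕ} {K L : Set (EuclideanSpace ℝ (Fin n))}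
    (hKv : Convex ℝ K) (hKc : IsCompact K) (hLv : Convex ℝ L) (hLc : IsCompact L)
    (h : ∀ t, charFun (ccMeasure K K) t = charFun (ccMeasure L L) t) (x) :
    covariogram K x = covariogram L x := by
  have := ccMeasure_finite K K hKc hKc
  have := ccMeasure_finite L L hLc hLc
  have h1 : ccMeasure K K = ccMeasure L L := Measure.ext_of_charFun (funext h)
  have c1 := cc_continuous K K hKc hKv hKc
  have c2 := cc_continuous L L hLc hLv hLc
  have m1 := ENNReal.continuous_ofReal.comp c1
  have m2 := ENNReal.continuous_ofReal.comp c2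
  have h2 := (withDensity_eq_iff_of_sigmaFinite m1.measurable.aemeasurable
    m2.measurable.aemeasurable).1 h1
  have h3 := congrFun ((m1.ae_eq_iff_eq _ m2).1 h2) x
  exact (ENNReal.ofReal_eq_ofReal_iff ENNReal.toReal_nonneg ENNReal.toReal_nonneg).1 h3

/-- If `g_F + g_G = g_{F'} + g_{G'}` and `g_{F,G} = g_{F',G'}` for convex bodies
`F, G, F', G'` with `int F ≠ ∅`, then either `g_F = g_{F'}` and `g_G = g_{G'}`, or
`g_F = g_{G'}` and `g_G = g_{F'}`. -/
theorem covariogram_system_decouples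
    (n : ℕ) (F G F' G' : Set (EuclideanSpace ℝ (Fin n)))
    (hFconv : Convex ℝ F) (hFcomp : IsCompact F) (hFint : (interior F).Nonempty)
    (hGconv : Convex ℝ G) (hGcomp : IsCompact G) (hGne : G.Nonempty)
    (hF'conv : Convex ℝ F') (hF'comp : IsCompact F') (hF'ne : F'.Nonempty)
    (hG'conv : Convex ℝ G') (hG'comp : IsCompact G') (hG'ne : G'.Nonempty)
    (hsum : ∀ x, covariogram F x + covariogram G x = covariogram F' x + covariogram G' x)
    (hcross : ∀ x, crossCovariogram F G x = crossCovariogram F' G' x) :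
    ((∀ x, covariogram F x = covariogram F' x) ∧ (∀ x, covariogram G x = covariogram G' x)) ∨
    ((∀ x, covariogram F x = covariogram G' x) ∧ (∀ x, covariogram G x = covariogram F' x)) := by
  have hsumM : ccMeasure F F + ccMeasure G G = ccMeasure F' F' + ccMeasure G' G' := by
    have key : ∀ A B : Set (EuclideanSpace ℝ (Fin n)), Convex ℝ A → IsCompact A →
        ccMeasure A A + ccMeasure B B = volume.withDensity
          (fun x => ENNReal.ofReal (covariogram A x + covariogram B x)) := by
      intro A B hA hA'
      have c1 := ENNReal.continuous_ofReal.comp (cc_continuous A A hA' hA hA')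
      rw [ccMeasure, ccMeasure]
      refine (withDensity_add_left c1.measurable _).symm.trans ?_
      congr 1
      funext x
      exact (ENNReal.ofReal_add ENNReal.toReal_nonneg ENNReal.toReal_nonneg).symm
    rw [key F G hFconv hFcomp, key F' G' hF'conv hF'comp]
    simp only [hsum]
  have hcrossM : ccMeasure F G = ccMeasure F' G' := by
    simp only [ccMeasure, hcross]
  have := ccMeasure_finite F F hFcomp hFcomp
  have := ccMeasure_finite G G hGcomp hGcomp
  have := ccMeasure_finite F' F' hF'comp hF'comp
  have := ccMeasure_finite G' G' hG'comp hG'comp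
  have hadd : ∀ (μ ν : Measure (EuclideanSpace ℝ (Fin n))) [IsFiniteMeasure μ]
      [IsFiniteMeasure ν] (t), charFun (μ + ν) t = charFun μ t + charFun ν t := by
    intro μ ν _ _ t
    simp only [charFun_eq_integral_innerProbChar]
    exact integral_add_measure (BoundedContinuousFunction.integrable _ _)
      (BoundedContinuousFunction.integrable _ _)
  have e1 : ∀ t, charFun (ccMeasure F F) t + charFun (ccMeasure G G) t
      = charFun (ccMeasure F' F') t + charFun (ccMeasure G' G') t := by
    intro t
    rw [← hadd, ← hadd, hsumM]
  have e2 : ∀ t, charFun (ccMeasure F F) t * charFun (ccMeasure G G) t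
      = charFun (ccMeasure F' F') t * charFun (ccMeasure G' G') t := by
    intro t
    have a1 : charFun (ccMeasure F G) t = charFun (ccMeasure F' G') t := by rw [hcrossM]
    have a2 : charFun (ccMeasure F G) (-t) = charFun (ccMeasure F' G') (-t) := by rw [hcrossM]
    rw [charFun_ccMeasure _ _ hFcomp hGcomp, charFun_ccMeasure _ _ hF'comp hG'comp] at a1 a2
    rw [neg_neg] at a2
    rw [charFun_ccMeasure _ _ hFcomp hFcomp, charFun_ccMeasure _ _ hGcomp hGcomp,
      charFun_ccMeasure _ _ hF'comp hF'comp, charFun_ccMeasure _ _ hG'comp hG'comp]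
    linear_combination (charFun (volume.restrict F) (-t) * charFun (volume.restrict G) t) * a1
      + (charFun (volume.restrict F') t * charFun (volume.restrict G') (-t)) * a2
  have e3 : ∀ t, (charFun (ccMeasure F F) t - charFun (ccMeasure F' F') t)
      * (charFun (ccMeasure F F) t - charFun (ccMeasure G' G') t) = 0 := by
    intro t
    linear_combination charFun (ccMeasure F F) t * e1 t - e2 t
  have han : ∀ (A : Set (EuclideanSpace ℝ (Fin n))) (hA : IsCompact A) (x₀ w),
      AnalyticOnNhd ℝ (fun t : ℝ => charFun (ccMeasure A A) (x₀ + t • w)) Set.univ := by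
    intro A hA x₀ w
    have := (charFun_line_analytic A hA x₀ w).mul (charFun_line_analytic A hA (-x₀) (-w))
    have heq : (fun t : ℝ => charFun (ccMeasure A A) (x₀ + t • w)) = fun t : ℝ =>
        charFun (volume.restrict A) (x₀ + t • w) * charFun (volume.restrict A) (-x₀ + t • -w) := by
      funext t
      rw [charFun_ccMeasure A A hA hA, neg_add, smul_neg]
    rw [heq]
    exact this
  by_cases hall : ∀ t, charFun (ccMeasure F F) t = charFun (ccMeasure F' F') t
  · left
    have h1 := cc_eq_of_charFun hFconv hFcomp hF'conv hF'comp hall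
    exact ⟨h1, fun x => by linarith [h1 x, hsum x]⟩
  · right
    push Not at hall
    obtain ⟨x₀, hx₀⟩ := hall
    have h1 := cc_eq_of_charFun hFconv hFcomp hG'conv hG'comp (by
      intro y
      have hz := AnalyticOnNhd.eq_zero_or_eq_zero_of_mul_eq_zero
        ((han F hFcomp x₀ (y - x₀)).sub (han F' hF'comp x₀ (y - x₀)))
        ((han F hFcomp x₀ (y - x₀)).sub (han G' hG'comp x₀ (y - x₀)))
        (fun t _ => e3 (x₀ + t • (y - x₀))) isPreconnected_univ
      rcases hz with hz | hz
      · have := hz 0 (Set.mem_univ _)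
        simp only [Pi.sub_apply, zero_smul, add_zero] at this
        exact absurd (sub_eq_zero.1 this) hx₀
      · have := hz 1 (Set.mem_univ _)
        simp only [Pi.sub_apply, one_smul, add_sub_cancel] at this
        exact sub_eq_zero.1 this)
    exact ⟨h1, fun x => by linarith [h1 x, hsum x]⟩
end

section
/- Let C ⊂ ℝ³ be a dihedral cone with edge the x₁-axis, let D ⊂ ℝ³ be a dihedral cone with edge the x₂-axis, and assume that no facet of C or of D is contained in {x : x₃ = 0}. For t ∈ ℝ let g(t) = λ₃(C ∩ (D + (0,0,t)) ∩ B(0,1)). Then d³g/dt³ is discontinuous at t = 0. More precisely, if both C and D meet both {x : x₃ > 0} and {x : x₃ < 0}, then lim_{t→0⁺} d³g/dt³(t) > lim_{t→0⁻} d³g/dt³(t), while if C meets both {x : x₃ > 0} and {x : x₃ < 0} and D ⊂ {x : x₃ ≥ 0}, then lim_{t→0⁺} d³g/dt³(t) < lim_{t→0⁻} d³g/dt³(t). -/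
open MeasureTheory Pointwise

namespace Dih
open Set Filter Topology

noncomputable def L (R x : ℝ) : ℝ := max (-R) (min R x)

lemma L_zero {R : ℝ} (hR : 0 ≤ R) : L R 0 = 0 := by
  unfold L; rw [min_eq_right hR, max_eq_right (by linarith)]

lemma L_mono (R : ℝ) : Monotone (L R) := fun x y h => by
  unfold L; exact max_le_max le_rfl (min_le_min le_rfl h)

lemma L_of_abs {R x : ℝ} (h : |x| ≤ R) : L R x = x := by
  have := abs_le.1 h
  unfold L; rw [min_eq_right this.2, max_eq_right this.1]

lemma vol_seg {R lo hi : ℝ} (h : lo ≤ hi) :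
    (volume {r : ℝ | (lo ≤ r ∧ r ≤ hi) ∧ |r| < R}).toReal = L R hi - L R lo := by
  have hL := L_mono R h
  have h1 : Ioo (L R lo) (L R hi) ⊆ {r : ℝ | (lo ≤ r ∧ r ≤ hi) ∧ |r| < R} := by
    intro r ⟨h1, h2⟩
    simp only [L, max_lt_iff, lt_max_iff, lt_min_iff, min_lt_iff] at h1 h2
    obtain ⟨h3, h4⟩ := h1
    have h5 : r < R ∧ r < hi := by
      rcases h2 with h2 | h2
      · linarith
      · exact h2
    refine ⟨⟨?_, h5.2.le⟩, abs_lt.2 ⟨h3, h5.1⟩⟩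
    rcases h4 with h4 | h4 <;> linarith
  have h2 : {r : ℝ | (lo ≤ r ∧ r ≤ hi) ∧ |r| < R} ⊆ Icc (L R lo) (L R hi) := by
    intro r ⟨⟨h1, h2⟩, h3⟩
    rw [← L_of_abs h3.le]
    exact ⟨L_mono R h1, L_mono R h2⟩
  have h3 := measure_mono (μ := volume) h1
  have h4 := measure_mono (μ := volume) h2
  rw [Real.volume_Ioo] at h3
  rw [Real.volume_Icc] at h4
  rw [le_antisymm h4 h3, ENNReal.toReal_ofReal (by linarith)]

lemma vol_ge {R lo : ℝ} (hR : 0 ≤ R) :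
    (volume {r : ℝ | lo ≤ r ∧ |r| < R}).toReal = R - L R lo := by
  have := vol_seg (R := R) (le_max_right R lo)
  have e : {r : ℝ | (lo ≤ r ∧ r ≤ max R lo) ∧ |r| < R} = {r : ℝ | lo ≤ r ∧ |r| < R} := by
    ext r
    constructor
    · rintro ⟨⟨h1, h2⟩, h3⟩; exact ⟨h1, h3⟩
    · rintro ⟨h1, h3⟩; exact ⟨⟨h1, le_max_of_le_left (abs_lt.1 h3).2.le⟩, h3⟩
  rw [e] at this
  rw [this]
  congr 1
  unfold L; rw [min_eq_left (le_max_left _ _), max_eq_right (by linarith)]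

lemma vol_le {R hi : ℝ} :
    (volume {r : ℝ | r ≤ hi ∧ |r| < R}).toReal = R + L R hi := by
  have := vol_seg (R := R) (min_le_right (-R) hi)
  have e : {r : ℝ | (min (-R) hi ≤ r ∧ r ≤ hi) ∧ |r| < R} = {r : ℝ | r ≤ hi ∧ |r| < R} := by
    ext r
    constructor
    · rintro ⟨⟨h1, h2⟩, h3⟩; exact ⟨h2, h3⟩
    · rintro ⟨h1, h3⟩; exact ⟨⟨min_le_of_left_le (abs_lt.1 h3).1.le, h1⟩, h3⟩
  rw [e] at this
  rw [this]
  have : L R (min (-R) hi) = -R := by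
    unfold L; rw [max_eq_left]
    exact (min_le_right _ _).trans (min_le_left _ _)
  rw [this]; ring

/-- Slice data of a planar wedge. -/
def Wedge (S : Set (ℝ × ℝ)) (a c₁ c₂ ε α β : ℝ) : Prop :=
  ∀ R : ℝ, 0 ≤ R → ∀ z : ℝ, (volume {r : ℝ | (r, z) ∈ S ∧ |r| < R}).toReal =
    a * R + c₁ * L R (α * z) + c₂ * L R (β * z) +
      ε * (L R (β * max z 0) - L R (α * max z 0))

lemma wedge_up {α β : ℝ} (h : α < β) :
    Wedge {p | α * p.2 ≤ p.1 ∧ p.1 ≤ β * p.2} 0 0 0 1 α β := by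
  intro R hR z
  rcases le_total 0 z with hz | hz
  · rw [max_eq_left hz]
    have := vol_seg (R := R) (lo := α * z) (hi := β * z) (by nlinarith)
    simp only [mem_ofPred_eq]
    rw [this]; ring
  · rw [max_eq_right hz]
    simp only [mem_ofPred_eq, mul_zero, sub_self, L_zero hR]
    rcases eq_or_lt_of_le hz with rfl | hz
    · have := vol_seg (R := R) (lo := α * 0) (hi := β * 0) (by simp)
      rw [this]; simp
    · have : {r : ℝ | (α * z ≤ r ∧ r ≤ β * z) ∧ |r| < R} = ∅ := by
        ext r; simp only [mem_ofPred_eq, mem_empty_iff_false, iff_false]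
        rintro ⟨⟨h1, h2⟩, -⟩
        nlinarith
      rw [this]; simp

lemma wedge_down {α β : ℝ} (h : α < β) :
    Wedge {p | β * p.2 ≤ p.1 ∧ p.1 ≤ α * p.2} 0 1 (-1) 1 α β := by
  intro R hR z
  rcases le_total 0 z with hz | hz
  · rw [max_eq_left hz]
    rcases eq_or_lt_of_le hz with rfl | hz
    · have := vol_seg (R := R) (lo := β * 0) (hi := α * 0) (by simp)
      simp only [mem_ofPred_eq]
      rw [this]; ring
    · have : {r : ℝ | (β * z ≤ r ∧ r ≤ α * z) ∧ |r| < R} = ∅ := by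
        ext r; simp only [mem_ofPred_eq, mem_empty_iff_false, iff_false]
        rintro ⟨⟨h1, h2⟩, -⟩
        nlinarith
      simp only [mem_ofPred_eq]
      rw [this]; simp; ring
  · rw [max_eq_right hz]
    simp only [mem_ofPred_eq, mul_zero, sub_self, L_zero hR]
    have := vol_seg (R := R) (lo := β * z) (hi := α * z) (by nlinarith)
    rw [this]; ring

lemma wedge_right {α β : ℝ} (h : α < β) :
    Wedge {p | β * p.2 ≤ p.1 ∧ α * p.2 ≤ p.1} 1 (-1) 0 (-1) α β := by
  intro R hR z
  simp only [mem_ofPred_eq]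
  rcases le_total 0 z with hz | hz
  · rw [max_eq_left hz]
    have : {r : ℝ | (β * z ≤ r ∧ α * z ≤ r) ∧ |r| < R} = {r : ℝ | β * z ≤ r ∧ |r| < R} := by
      ext r
      constructor
      · rintro ⟨⟨h1, h2⟩, h3⟩; exact ⟨h1, h3⟩
      · rintro ⟨h1, h3⟩; exact ⟨⟨h1, by nlinarith⟩, h3⟩
    rw [this, vol_ge hR]; ring
  · rw [max_eq_right hz]
    have : {r : ℝ | (β * z ≤ r ∧ α * z ≤ r) ∧ |r| < R} = {r : ℝ | α * z ≤ r ∧ |r| < R} := by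
      ext r
      constructor
      · rintro ⟨⟨h1, h2⟩, h3⟩; exact ⟨h2, h3⟩
      · rintro ⟨h1, h3⟩; exact ⟨⟨by nlinarith, h1⟩, h3⟩
    rw [this, vol_ge hR]; simp [L_zero hR]; ring

lemma wedge_left {α β : ℝ} (h : α < β) :
    Wedge {p | p.1 ≤ α * p.2 ∧ p.1 ≤ β * p.2} 1 0 1 (-1) α β := by
  intro R hR z
  simp only [mem_ofPred_eq]
  rcases le_total 0 z with hz | hz
  · rw [max_eq_left hz]
    have : {r : ℝ | (r ≤ α * z ∧ r ≤ β * z) ∧ |r| < R} = {r : ℝ | r ≤ α * z ∧ |r| < R} := by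
      ext r
      constructor
      · rintro ⟨⟨h1, h2⟩, h3⟩; exact ⟨h1, h3⟩
      · rintro ⟨h1, h3⟩; exact ⟨⟨h1, by nlinarith⟩, h3⟩
    rw [this, vol_le]; ring
  · rw [max_eq_right hz]
    have : {r : ℝ | (r ≤ α * z ∧ r ≤ β * z) ∧ |r| < R} = {r : ℝ | r ≤ β * z ∧ |r| < R} := by
      ext r
      constructor
      · rintro ⟨⟨h1, h2⟩, h3⟩; exact ⟨h2, h3⟩
      · rintro ⟨h1, h3⟩; exact ⟨⟨by nlinarith, h1⟩, h3⟩
    rw [this, vol_le]; simp [L_zero hR]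

lemma and_set_comm (P Q : ℝ × ℝ → Prop) : {p | P p ∧ Q p} = {p | Q p ∧ P p} := by
  ext; exact and_comm

/-- Classification of planar wedges. -/
lemma classify {p₁ q₁ p₂ q₂ : ℝ} (h₁ : p₁ ≠ 0) (h₂ : p₂ ≠ 0) (hd : p₁ * q₂ - p₂ * q₁ ≠ 0)
    (S : Set (ℝ × ℝ)) (hS : S = {p | p₁ * p.1 + q₁ * p.2 ≤ 0 ∧ p₂ * p.1 + q₂ * p.2 ≤ 0}) :
    ∃ a c₁ c₂ ε α β : ℝ, Wedge S a c₁ c₂ ε α β ∧ α < β ∧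
      ((ε = 1 ∧ ((∀ p ∈ S, 0 ≤ p.2) ∨ (∀ p ∈ S, p.2 ≤ 0))) ∨
       (ε = -1 ∧ (∃ p ∈ S, p.2 < 0))) := by
  have key : ∀ p q : ℝ, p ≠ 0 → ∃ γ, q = - γ * p := fun p q hp => ⟨-q / p, by field_simp⟩
  obtain ⟨γ₁, rfl⟩ := key p₁ q₁ h₁
  obtain ⟨γ₂, rfl⟩ := key p₂ q₂ h₂
  have hγ : γ₁ ≠ γ₂ := by rintro rfl; apply hd; ring
  have pos : ∀ p γ : ℝ, 0 < p → ∀ x : ℝ × ℝ, p * x.1 + -γ * p * x.2 ≤ 0 ↔ x.1 ≤ γ * x.2 := by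
    intro p γ hp x
    have : p * x.1 + -γ * p * x.2 = p * (x.1 - γ * x.2) := by ring
    rw [this, ← sub_nonpos (a := x.1)]; constructor <;> intro h <;> nlinarith
  have neg : ∀ p γ : ℝ, p < 0 → ∀ x : ℝ × ℝ, p * x.1 + -γ * p * x.2 ≤ 0 ↔ γ * x.2 ≤ x.1 := by
    intro p γ hp x
    have : p * x.1 + -γ * p * x.2 = (-p) * (γ * x.2 - x.1) := by ring
    rw [this, ← sub_nonpos (a := γ * x.2)]; constructor <;> intro h <;> nlinarith
  have mixed : ∀ a b : ℝ, a ≠ b → ∀ S : Set (ℝ × ℝ), S = {p | a * p.2 ≤ p.1 ∧ p.1 ≤ b * p.2} →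
    ∃ a c₁ c₂ ε α β : ℝ, Wedge S a c₁ c₂ ε α β ∧ α < β ∧
      ((ε = 1 ∧ ((∀ p ∈ S, 0 ≤ p.2) ∨ (∀ p ∈ S, p.2 ≤ 0))) ∨
       (ε = -1 ∧ (∃ p ∈ S, p.2 < 0))) := by
    rintro a b hab S rfl
    rcases lt_or_gt_of_ne hab with h | h
    · refine ⟨_, _, _, _, a, b, wedge_up h, h, Or.inl ⟨rfl, Or.inl ?_⟩⟩
      rintro p ⟨h1, h2⟩; by_contra! h3; nlinarith
    · refine ⟨_, _, _, _, b, a, wedge_down h, h, Or.inl ⟨rfl, Or.inr ?_⟩⟩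
      rintro p ⟨h1, h2⟩; by_contra! h3; nlinarith
  rcases lt_or_gt_of_ne h₁ with h₁ | h₁ <;> rcases lt_or_gt_of_ne h₂ with h₂ | h₂
  · simp only [neg _ _ h₁, neg _ _ h₂] at hS
    rcases lt_or_gt_of_ne hγ with h | h
    · refine ⟨1, -1, 0, -1, γ₁, γ₂, ?_, h, Or.inr ⟨rfl, (-γ₁, -1), ?_⟩⟩
      · rw [hS, and_set_comm]; exact wedge_right h
      · rw [hS]; constructor
        · constructor <;> simp <;> linarith
        · norm_num
    · refine ⟨1, -1, 0, -1, γ₂, γ₁, ?_, h, Or.inr ⟨rfl, (-γ₂, -1), ?_⟩⟩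
      · rw [hS]; exact wedge_right h
      · rw [hS]; constructor
        · constructor <;> simp <;> linarith
        · norm_num
  · simp only [neg _ _ h₁, pos _ _ h₂] at hS
    exact mixed _ _ hγ S hS
  · simp only [pos _ _ h₁, neg _ _ h₂] at hS
    rw [and_set_comm] at hS
    exact mixed _ _ hγ.symm S hS
  · simp only [pos _ _ h₁, pos _ _ h₂] at hS
    rcases lt_or_gt_of_ne hγ with h | h
    · refine ⟨1, 0, 1, -1, γ₁, γ₂, ?_, h, Or.inr ⟨rfl, (-γ₂, -1), ?_⟩⟩
      · rw [hS]; exact wedge_left h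
      · rw [hS]; constructor
        · constructor <;> simp <;> linarith
        · norm_num
    · refine ⟨1, 0, 1, -1, γ₂, γ₁, ?_, h, Or.inr ⟨rfl, (-γ₁, -1), ?_⟩⟩
      · rw [hS, and_set_comm]; exact wedge_left h
      · rw [hS]; constructor
        · constructor <;> simp <;> linarith
        · norm_num

lemma param_bound {a b : ℝ} {V I : Set ℝ} (hV : Icc a b ⊆ V) (hI : IsOpen I)
    {f : ℝ × ℝ → ℝ} (hf : ContinuousOn f (V ×ˢ I)) {τ₀ : ℝ} (h0 : τ₀ ∈ I) :
    ∃ r > 0, Metric.closedBall τ₀ r ⊆ I ∧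
      ∃ M : ℝ, ∀ θ ∈ Icc a b, ∀ τ ∈ Metric.closedBall τ₀ r, ‖f (θ, τ)‖ ≤ M := by
  obtain ⟨r, hr, hrI⟩ := Metric.nhds_basis_closedBall.mem_iff.1 (hI.mem_nhds h0)
  refine ⟨r, hr, hrI, ?_⟩
  have hc : IsCompact (Icc a b ×ˢ Metric.closedBall τ₀ r) :=
    isCompact_Icc.prod (isCompact_closedBall _ _)
  obtain ⟨M, hM⟩ := hc.exists_bound_of_continuousOn (hf.mono (prod_mono hV hrI))
  exact ⟨M, fun θ hθ τ hτ => hM (θ, τ) ⟨hθ, hτ⟩⟩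

lemma param_meas {a b : ℝ} {V I T : Set ℝ} (hV : Icc a b ⊆ V) (hT : MeasurableSet T)
    (hTs : T ⊆ Icc a b) {f : ℝ × ℝ → ℝ} (hf : ContinuousOn f (V ×ˢ I)) {τ : ℝ} (h0 : τ ∈ I) :
    AEStronglyMeasurable (fun θ => f (θ, τ)) (volume.restrict T) := by
  apply ContinuousOn.aestronglyMeasurable _ hT
  apply hf.comp (by fun_prop)
  intro θ hθ
  exact ⟨hV (hTs hθ), h0⟩

lemma finite_T {a b : ℝ} {T : Set ℝ} (hTs : T ⊆ Icc a b) :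
    IsFiniteMeasure (volume.restrict T : Measure ℝ) := by
  refine ⟨?_⟩
  rw [Measure.restrict_apply_univ]
  exact (measure_mono hTs).trans_lt (by simp)

lemma param_cont {a b : ℝ} {V I T : Set ℝ} (hV : Icc a b ⊆ V) (hI : IsOpen I)
    (hT : MeasurableSet T)
    (hTs : T ⊆ Icc a b) {f : ℝ × ℝ → ℝ} (hf : ContinuousOn f (V ×ˢ I)) :
    ContinuousOn (fun τ => ∫ θ in T, f (θ, τ)) I := by
  intro τ₀ h0
  apply ContinuousAt.continuousWithinAt
  have := finite_T hTs
  obtain ⟨r, hr, hrI, M, hM⟩ := param_bound hV hI hf h0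
  have hnb : Metric.closedBall τ₀ r ∈ 𝓝 τ₀ := Metric.closedBall_mem_nhds _ hr
  apply continuousAt_of_dominated (bound := fun _ => M)
  · filter_upwards [hnb] with τ hτ
    exact param_meas hV hT hTs hf (hrI hτ)
  · filter_upwards [hnb] with τ hτ
    filter_upwards [ae_restrict_mem hT] with θ hθ
    exact hM θ (hTs hθ) τ hτ
  · exact integrable_const _
  · filter_upwards [ae_restrict_mem hT] with θ hθ
    have : ContinuousOn (fun τ => f (θ, τ)) I :=
      hf.comp (by fun_prop) (fun τ hτ => ⟨hV (hTs hθ), hτ⟩)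
    exact this.continuousAt (hI.mem_nhds h0)

lemma param_deriv {a b : ℝ} {V I T : Set ℝ} (hV : Icc a b ⊆ V) (hVo : IsOpen V) (hI : IsOpen I)
    (hT : MeasurableSet T)
    (hTs : T ⊆ Icc a b) {f : ℝ × ℝ → ℝ} (hf : ContDiffOn ℝ 1 f (V ×ˢ I)) {τ₀ : ℝ} (h0 : τ₀ ∈ I) :
    HasDerivAt (fun τ => ∫ θ in T, f (θ, τ)) (∫ θ in T, fderiv ℝ f (θ, τ₀) (0, 1)) τ₀ := by
  have := finite_T hTs
  have hO : IsOpen (V ×ˢ I) := hVo.prod hI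
  have hf' : ContinuousOn (fun p => fderiv ℝ f p (0, 1)) (V ×ˢ I) :=
    (hf.continuousOn_fderiv_of_isOpen hO le_rfl).clm_apply continuousOn_const
  obtain ⟨r, hr, hrI, M, hM⟩ := param_bound hV hI hf' h0
  obtain ⟨r', hr', hrI', M', hM'⟩ := param_bound hV hI hf.continuousOn h0
  have hnb : Metric.closedBall τ₀ r ∈ 𝓝 τ₀ := Metric.closedBall_mem_nhds _ hr
  refine (hasDerivAt_integral_of_dominated_loc_of_deriv_le (F := fun τ θ => f (θ, τ))
    (F' := fun τ θ => fderiv ℝ f (θ, τ) (0, 1)) (bound := fun _ => M) hnb ?_ ?_ ?_ ?_ ?_ ?_).2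
  · filter_upwards [hnb] with τ hτ
    exact param_meas hV hT hTs hf.continuousOn (hrI hτ)
  · refine Integrable.of_bound (param_meas hV hT hTs hf.continuousOn h0) M' ?_
    filter_upwards [ae_restrict_mem hT] with θ hθ
    exact hM' θ (hTs hθ) τ₀ (Metric.mem_closedBall_self hr'.le)
  · exact param_meas hV hT hTs hf' h0
  · filter_upwards [ae_restrict_mem hT] with θ hθ τ hτ
    exact hM θ (hTs hθ) τ hτ
  · exact integrable_const _
  · filter_upwards [ae_restrict_mem hT] with θ hθ τ hτ
    have hd : HasFDerivAt f (fderiv ℝ f (θ, τ)) (θ, τ) :=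
      ((hf.differentiableOn one_ne_zero).differentiableAt
        (hO.mem_nhds ⟨hV (hTs hθ), hrI hτ⟩)).hasFDerivAt
    have h2 : HasDerivAt (fun τ : ℝ => (θ, τ)) ((0 : ℝ), (1 : ℝ)) τ :=
      (hasDerivAt_const τ θ).prodMk (hasDerivAt_id τ)
    exact hd.comp_hasDerivAt τ h2

lemma param_contDiff {a b : ℝ} {V I T : Set ℝ} (hV : Icc a b ⊆ V) (hVo : IsOpen V) (hI : IsOpen I)
    (hT : MeasurableSet T) (hTs : T ⊆ Icc a b) (n : ℕ) : ∀ {f : ℝ × ℝ → ℝ},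
    ContDiffOn ℝ n f (V ×ˢ I) → ContDiffOn ℝ n (fun τ => ∫ θ in T, f (θ, τ)) I := by
  induction n with
  | zero =>
    intro f hf
    simp only [Nat.cast_zero, contDiffOn_zero] at hf ⊢
    exact param_cont hV hI hT hTs hf
  | succ n ih =>
    intro f hf
    have hO : IsOpen (V ×ˢ I) := hVo.prod hI
    push_cast at hf ⊢
    have h1 : ContDiffOn ℝ 1 f (V ×ˢ I) := hf.of_le (by simp)
    rw [contDiffOn_succ_iff_deriv_of_isOpen hI]
    refine ⟨fun τ hτ => (param_deriv hV hVo hI hT hTs h1 hτ).differentiableAt.differentiableWithinAt,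
      by simp, ?_⟩
    have h2 : ContDiffOn ℝ n (fun p => fderiv ℝ f p (0, 1)) (V ×ˢ I) :=
      (hf.fderiv_of_isOpen hO le_rfl).clm_apply contDiffOn_const
    exact (ih h2).congr fun τ hτ => (param_deriv hV hVo hI hT hTs h1 hτ).deriv

/-- final step -/
lemma third_deriv_limits {g H : ℝ → ℝ} {κ : ℝ} (hH : ContDiffAt ℝ 2 H 0)
    (hg : ∀ᶠ t in 𝓝 0, HasDerivAt g (H t + κ / 2 * (max t 0) ^ 2) t) :
    ∃ Lp Lm : ℝ,
      Tendsto (deriv (deriv (deriv g))) (𝓝[>] 0) (𝓝 Lp) ∧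
      Tendsto (deriv (deriv (deriv g))) (𝓝[<] 0) (𝓝 Lm) ∧ Lp - Lm = κ := by
  obtain ⟨u, hu, hHu⟩ := hH.contDiffOn le_rfl (by simp)
  obtain ⟨δ, hδ, hb⟩ := Metric.mem_nhds_iff.1
    (Filter.inter_mem (by simpa using hu : u ∈ 𝓝 (0:ℝ)) hg)
  have hI : IsOpen (Metric.ball (0:ℝ) δ) := Metric.isOpen_ball
  set I := Metric.ball (0:ℝ) δ
  have hHI : ContDiffOn ℝ 2 H I := hHu.mono fun t ht => (hb ht).1
  have hgI : ∀ t ∈ I, deriv g t = H t + κ / 2 * (max t 0) ^ 2 := fun t ht => (hb ht).2.deriv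
  have hH1 : ∀ t ∈ I, HasDerivAt H (deriv H t) t := fun t ht =>
    ((hHI.differentiableOn two_ne_zero).differentiableAt (hI.mem_nhds ht)).hasDerivAt
  have hH' : ContDiffOn ℝ 1 (deriv H) I := hHI.deriv_of_isOpen hI (by norm_num)
  have hH2 : ∀ t ∈ I, HasDerivAt (deriv H) (deriv (deriv H) t) t := fun t ht =>
    ((hH'.differentiableOn one_ne_zero).differentiableAt (hI.mem_nhds ht)).hasDerivAt
  have hH3 : ContinuousAt (deriv (deriv H)) 0 :=
    (hH'.continuousOn_deriv_of_isOpen hI le_rfl).continuousAt (hI.mem_nhds (Metric.mem_ball_self hδ))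
  have hIn : I ∈ 𝓝 (0:ℝ) := hI.mem_nhds (Metric.mem_ball_self hδ)
  refine ⟨deriv (deriv H) 0 + κ, deriv (deriv H) 0, ?_, ?_, by ring⟩
  · have e : ∀ t ∈ I ∩ Ioi 0, deriv (deriv (deriv g)) t = deriv (deriv H) t + κ := by
      have hO : IsOpen (I ∩ Ioi 0) := hI.inter isOpen_Ioi
      have e1 : ∀ t ∈ I ∩ Ioi 0, deriv (deriv g) t = deriv H t + κ * t := by
        intro t ht
        have : deriv g =ᶠ[𝓝 t] fun t => H t + κ / 2 * t ^ 2 := by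
          filter_upwards [hO.mem_nhds ht] with s hs
          rw [hgI s hs.1, max_eq_left (le_of_lt hs.2)]
        rw [this.deriv_eq]
        have h := (hH1 t ht.1).add ((hasDerivAt_pow 2 t).const_mul (κ / 2))
        refine (h.congr_deriv ?_).deriv
        simp; ring
      intro t ht
      have : deriv (deriv g) =ᶠ[𝓝 t] fun t => deriv H t + κ * t := by
        filter_upwards [hO.mem_nhds ht] with s hs using e1 s hs
      rw [this.deriv_eq]
      have h := (hH2 t ht.1).add ((hasDerivAt_id t).const_mul κ)
      refine (h.congr_deriv ?_).deriv
      simp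
    have : Tendsto (fun t => deriv (deriv H) t + κ) (𝓝[>] 0) (𝓝 (deriv (deriv H) 0 + κ)) :=
      (hH3.tendsto.mono_left nhdsWithin_le_nhds).add_const κ
    refine this.congr' ?_
    filter_upwards [nhdsWithin_le_nhds hIn, self_mem_nhdsWithin] with t h1 h2
    exact (e t ⟨h1, h2⟩).symm
  · have e : ∀ t ∈ I ∩ Iio 0, deriv (deriv (deriv g)) t = deriv (deriv H) t := by
      have hO : IsOpen (I ∩ Iio 0) := hI.inter isOpen_Iio
      have e1 : ∀ t ∈ I ∩ Iio 0, deriv (deriv g) t = deriv H t := by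
        intro t ht
        have : deriv g =ᶠ[𝓝 t] H := by
          filter_upwards [hO.mem_nhds ht] with s hs
          rw [hgI s hs.1, max_eq_right (le_of_lt hs.2)]; simp
        rw [this.deriv_eq]
      intro t ht
      have : deriv (deriv g) =ᶠ[𝓝 t] deriv H := by
        filter_upwards [hO.mem_nhds ht] with s hs using e1 s hs
      rw [this.deriv_eq]
    have : Tendsto (fun t => deriv (deriv H) t) (𝓝[<] 0) (𝓝 (deriv (deriv H) 0)) :=
      (hH3.tendsto.mono_left nhdsWithin_le_nhds)
    refine this.congr' ?_
    filter_upwards [nhdsWithin_le_nhds hIn, self_mem_nhdsWithin] with t h1 h2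
    exact (e t ⟨h1, h2⟩).symm

/-- The elliptic sections. -/
def E (γ τ : ℝ) : Set (ℝ × ℝ) := {p | p.1 ^ 2 + p.2 ^ 2 + γ ^ 2 * (p.2 - τ) ^ 2 < 1}

noncomputable def Ar (S : Set (ℝ × ℝ)) (γ τ : ℝ) : ℝ := (volume (S ∩ E γ τ)).toReal

lemma measurableSet_E (γ τ : ℝ) : MeasurableSet (E γ τ) :=
  (isOpen_lt (by fun_prop) (by fun_prop)).measurableSet

noncomputable def rad (γ θ τ : ℝ) : ℝ :=
  (γ ^ 2 * τ * Real.sin θ + √(1 + γ ^ 2 * Real.sin θ ^ 2 - γ ^ 2 * τ ^ 2)) /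
    (1 + γ ^ 2 * Real.sin θ ^ 2)

lemma rad_aux {γ τ s ρ : ℝ} (h : γ ^ 2 * τ ^ 2 < 1) (hρ : 0 < ρ) :
    ρ ^ 2 + γ ^ 2 * (ρ * s - τ) ^ 2 < 1 ↔
      ρ < (γ ^ 2 * τ * s + √(1 + γ ^ 2 * s ^ 2 - γ ^ 2 * τ ^ 2)) / (1 + γ ^ 2 * s ^ 2) := by
  have hk : 0 < 1 + γ ^ 2 * s ^ 2 := by positivity
  set k := 1 + γ ^ 2 * s ^ 2 with hkd
  have hX : (γ ^ 2 * τ * s) ^ 2 < k - γ ^ 2 * τ ^ 2 := by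
    have : k - γ ^ 2 * τ ^ 2 - (γ ^ 2 * τ * s) ^ 2 = k * (1 - γ ^ 2 * τ ^ 2) := by
      rw [hkd]; ring
    have : 0 < k * (1 - γ ^ 2 * τ ^ 2) := mul_pos hk (by linarith)
    linarith
  have h1 : ρ ^ 2 + γ ^ 2 * (ρ * s - τ) ^ 2 < 1 ↔
      (k * ρ - γ ^ 2 * τ * s) ^ 2 < k - γ ^ 2 * τ ^ 2 := by
    have : k - γ ^ 2 * τ ^ 2 - (k * ρ - γ ^ 2 * τ * s) ^ 2 =
        k * (1 - (ρ ^ 2 + γ ^ 2 * (ρ * s - τ) ^ 2)) := by rw [hkd]; ring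
    rw [← sub_pos, ← sub_pos (a := k - γ ^ 2 * τ ^ 2), this, mul_pos_iff_of_pos_left hk]
  rw [h1, Real.sq_lt, lt_div_iff₀ hk]
  have h2 := (Real.sq_lt.1 hX).2
  constructor
  · rintro ⟨h3, h4⟩; linarith
  · intro h3; constructor
    · have := mul_pos hk hρ; linarith
    · linarith

lemma rad_pos {γ τ θ : ℝ} (h : γ ^ 2 * τ ^ 2 < 1) : 0 < rad γ θ τ := by
  have hk : 0 < 1 + γ ^ 2 * Real.sin θ ^ 2 := by positivity
  unfold rad
  apply div_pos _ hk
  have hX : (γ ^ 2 * τ * Real.sin θ) ^ 2 < 1 + γ ^ 2 * Real.sin θ ^ 2 - γ ^ 2 * τ ^ 2 := by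
    have : 0 < (1 + γ ^ 2 * Real.sin θ ^ 2) * (1 - γ ^ 2 * τ ^ 2) := mul_pos hk (by linarith)
    nlinarith
  have := (Real.sq_lt.1 hX).1
  linarith

lemma lint_id {r : ℝ} (hr : 0 ≤ r) :
    ∫⁻ ρ in Ioo 0 r, ENNReal.ofReal ρ = ENNReal.ofReal (r ^ 2 / 2) := by
  rw [← ofReal_integral_eq_lintegral_ofReal]
  · rw [← integral_Ioc_eq_integral_Ioo, ← intervalIntegral.integral_of_le hr]
    simp
  · exact (continuous_id.integrableOn_Icc).mono_set Ioo_subset_Icc_self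
  · filter_upwards [ae_restrict_mem measurableSet_Ioo] with ρ hρ using hρ.1.le

lemma Ar_polar {S : Set (ℝ × ℝ)} (hS : MeasurableSet S)
    (hcone : ∀ r : ℝ, 0 < r → ∀ p : ℝ × ℝ, (r * p.1, r * p.2) ∈ S ↔ p ∈ S)
    {γ τ : ℝ} (h : γ ^ 2 * τ ^ 2 < 1) :
    Ar S γ τ = ∫ θ in {θ | (Real.cos θ, Real.sin θ) ∈ S} ∩ Ioo (-Real.pi) Real.pi,
      (rad γ θ τ) ^ 2 / 2 := by
  have hT : MeasurableSet {θ : ℝ | (Real.cos θ, Real.sin θ) ∈ S} :=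
    (by fun_prop : Measurable fun θ : ℝ => (Real.cos θ, Real.sin θ)) hS
  have hSE : MeasurableSet (S ∩ E γ τ) := hS.inter (measurableSet_E γ τ)
  unfold Ar
  rw [integral_eq_lintegral_of_nonneg_ae]
  rotate_left
  · exact Eventually.of_forall fun θ => by positivity
  · apply Measurable.aestronglyMeasurable
    unfold rad; fun_prop
  congr 1
  rw [← lintegral_indicator_one hSE, ← lintegral_comp_polarCoord_symm]
  have ht : polarCoord.target = Ioi (0:ℝ) ×ˢ Ioo (-Real.pi) Real.pi := rfl
  rw [ht, Measure.volume_eq_prod, ← Measure.prod_restrict]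
  rw [lintegral_prod_symm']
  · rw [← Measure.restrict_restrict hT, ← lintegral_indicator hT]
    congr 1
    ext θ
    by_cases hθ : (Real.cos θ, Real.sin θ) ∈ S
    · rw [indicator_of_mem (by exact hθ), ← lint_id (rad_pos h).le,
        ← lintegral_indicator measurableSet_Ioi, ← lintegral_indicator measurableSet_Ioo]
      congr 1
      ext ρ
      by_cases hρ : 0 < ρ
      · rw [indicator_of_mem (by exact hρ)]
        have e : (polarCoord.symm (ρ, θ)) ∈ S ∩ E γ τ ↔ ρ ∈ Ioo 0 (rad γ θ τ) := by
          rw [polarCoord_symm_apply]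
          constructor
          · rintro ⟨-, h2⟩
            refine ⟨hρ, ?_⟩
            apply (rad_aux h hρ).1
            refine lt_of_eq_of_lt ?_ h2
            have := Real.sin_sq_add_cos_sq θ
            simp only
            linear_combination (-ρ ^ 2) * this
          · rintro ⟨-, h2⟩
            refine ⟨(hcone ρ hρ _).2 hθ, ?_⟩
            refine lt_of_eq_of_lt ?_ ((rad_aux h hρ).2 h2)
            have := Real.sin_sq_add_cos_sq θ
            simp only
            linear_combination (ρ ^ 2) * this
        by_cases hm : ρ ∈ Ioo 0 (rad γ θ τ)
        · rw [indicator_of_mem hm, indicator_of_mem (e.2 hm)]; simp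
        · rw [indicator_of_notMem hm, indicator_of_notMem (fun hh => hm (e.1 hh))]; simp
      · rw [indicator_of_notMem (by exact hρ), indicator_of_notMem (fun hh => hρ hh.1)]
    · rw [indicator_of_notMem (by exact hθ)]
      rw [lintegral_eq_zero_iff']
      · filter_upwards [ae_restrict_mem measurableSet_Ioi] with ρ hρ
        rw [indicator_of_notMem]
        · simp
        · rw [polarCoord_symm_apply]
          rintro ⟨h1, -⟩
          exact hθ ((hcone ρ hρ _).1 h1)
      · apply Measurable.aemeasurable
        simp only [smul_eq_mul]
        refine Measurable.mul (by fun_prop) ?_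
        exact (measurable_one.indicator hSE).comp
          (continuous_polarCoord_symm.measurable.comp (by fun_prop))
  · simp only [smul_eq_mul]
    refine Measurable.mul (by fun_prop) ?_
    exact (measurable_one.indicator hSE).comp continuous_polarCoord_symm.measurable

lemma exists_delta (γ : ℝ) : ∃ δ > 0, ∀ τ ∈ Ioo (-δ) δ, γ ^ 2 * τ ^ 2 < 1 := by
  refine ⟨1 / (1 + |γ|), by positivity, fun τ hτ => ?_⟩
  have h1 : |τ| < 1 / (1 + |γ|) := abs_lt.2 hτ
  rw [lt_div_iff₀ (by positivity)] at h1
  have h2 : |γ| * |τ| < 1 := by nlinarith [abs_nonneg τ, abs_nonneg γ]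
  rw [← abs_mul] at h2
  have := (sq_lt_one_iff_abs_lt_one (γ * τ)).2 h2
  rwa [mul_pow] at this

lemma Ar_contDiffAt {S : Set (ℝ × ℝ)} (hS : MeasurableSet S)
    (hcone : ∀ r : ℝ, 0 < r → ∀ p : ℝ × ℝ, (r * p.1, r * p.2) ∈ S ↔ p ∈ S) (γ : ℝ) :
    ContDiffAt ℝ 2 (Ar S γ) 0 := by
  obtain ⟨δ, hδ, h⟩ := exists_delta γ
  have hT : MeasurableSet {θ : ℝ | (Real.cos θ, Real.sin θ) ∈ S} :=
    (by fun_prop : Measurable fun θ : ℝ => (Real.cos θ, Real.sin θ)) hS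
  have hO : IsOpen (Ioo (-δ) δ) := isOpen_Ioo
  have hn : Ioo (-δ) δ ∈ 𝓝 (0:ℝ) := Ioo_mem_nhds (by linarith) hδ
  have key := param_contDiff (V := univ) (I := Ioo (-δ) δ) (a := -Real.pi) (b := Real.pi)
    (T := {θ | (Real.cos θ, Real.sin θ) ∈ S} ∩ Ioo (-Real.pi) Real.pi)
    (subset_univ _) isOpen_univ hO (hT.inter measurableSet_Ioo)
    (inter_subset_right.trans Ioo_subset_Icc_self) 2
    (f := fun p => (rad γ p.1 p.2) ^ 2 / 2) (by
      intro p hp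
      apply ContDiffAt.contDiffWithinAt
      have h1 := h p.2 hp.2
      have h2 : 1 + γ ^ 2 * Real.sin p.1 ^ 2 - γ ^ 2 * p.2 ^ 2 ≠ 0 := by
        have : 0 ≤ γ ^ 2 * Real.sin p.1 ^ 2 := by positivity
        linarith
      have h3 : 1 + γ ^ 2 * Real.sin p.1 ^ 2 ≠ 0 := by positivity
      unfold rad
      have hs : ContDiffAt ℝ 2 (fun p : ℝ × ℝ => Real.sin p.1) p :=
        Real.contDiff_sin.contDiffAt.comp p contDiffAt_fst
      have hq : ContDiffAt ℝ 2
          (fun p : ℝ × ℝ => √(1 + γ ^ 2 * Real.sin p.1 ^ 2 - γ ^ 2 * p.2 ^ 2)) p :=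
        ContDiffAt.sqrt (by fun_prop) h2
      have hd : ContDiffAt ℝ 2 (fun p : ℝ × ℝ => 1 + γ ^ 2 * Real.sin p.1 ^ 2) p := by fun_prop
      have hnum : ContDiffAt ℝ 2 (fun p : ℝ × ℝ => γ ^ 2 * p.2 * Real.sin p.1 +
        √(1 + γ ^ 2 * Real.sin p.1 ^ 2 - γ ^ 2 * p.2 ^ 2)) p :=
        ContDiffAt.add (by fun_prop) hq
      exact ((hnum.div hd h3).pow 2).div_const 2)
  refine (key.contDiffAt hn).congr_of_eventuallyEq ?_
  filter_upwards [hn] with τ hτ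
  exact Ar_polar hS hcone (h τ hτ)

lemma slice {β : Type*} [MeasureSpace β] [SFinite (volume : Measure β)] {Q : Set (ℝ × β)}
    (hQ : MeasurableSet Q) (hfin : (volume : Measure (ℝ × β)) Q ≠ ⊤) :
    Integrable (fun b => (volume {r : ℝ | (r, b) ∈ Q}).toReal) ∧
    ((volume : Measure (ℝ × β)) Q).toReal = ∫ b, (volume {r : ℝ | (r, b) ∈ Q}).toReal := by
  have e : (volume : Measure (ℝ × β)) Q = ∫⁻ b, volume {r : ℝ | (r, b) ∈ Q} := by
    rw [Measure.volume_eq_prod, Measure.prod_apply_symm hQ]; rfl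
  have hm : Measurable fun b => volume {r : ℝ | (r, b) ∈ Q} :=
    measurable_measure_prodMk_right hQ
  rw [e] at hfin
  refine ⟨integrable_toReal_of_lintegral_ne_top hm.aemeasurable hfin, ?_⟩
  rw [integral_toReal hm.aemeasurable (ae_lt_top hm hfin), e]

lemma E_finite (γ τ : ℝ) : volume (E γ τ) < ⊤ := by
  have : E γ τ ⊆ Icc (-1) 1 ×ˢ Icc (-1) 1 := by
    rintro ⟨y, z⟩ h
    simp only [E, mem_ofPred_eq] at h
    have h0 : 0 ≤ γ ^ 2 * (z - τ) ^ 2 := by positivity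
    have h1 := abs_le.1 ((sq_le_one_iff_abs_le_one y).1 (by nlinarith [sq_nonneg z]))
    have h2 := abs_le.1 ((sq_le_one_iff_abs_le_one z).1 (by nlinarith [sq_nonneg y]))
    exact ⟨h1, h2⟩
  exact (measure_mono this).trans_lt (isCompact_Icc.prod isCompact_Icc).measure_lt_top

lemma mem_E_iff {γ τ y z : ℝ} :
    (y, z) ∈ E γ τ ↔ |y| < √(1 - z ^ 2 - γ ^ 2 * (z - τ) ^ 2) := by
  rw [Real.lt_sqrt (abs_nonneg _), sq_abs]
  simp only [E, mem_ofPred_eq]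
  constructor <;> intro h <;> linarith

lemma mem_E_iff' {γ τ y z : ℝ} :
    (y, z) ∈ E γ τ ↔ |γ * (z - τ)| < √(1 - y ^ 2 - z ^ 2) := by
  rw [Real.lt_sqrt (abs_nonneg _), sq_abs, mul_pow]
  simp only [E, mem_ofPred_eq]
  constructor <;> intro h <;> linarith

/-- slice length -/
noncomputable def ms (S : Set (ℝ × ℝ)) (γ τ z : ℝ) : ℝ :=
  (volume {r : ℝ | (r, z) ∈ S ∧ |r| < √(1 - z ^ 2 - γ ^ 2 * (z - τ) ^ 2)}).toReal

lemma ms_eq (S : Set (ℝ × ℝ)) (γ τ z : ℝ) :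
    ms S γ τ z = (volume {r : ℝ | (r, z) ∈ S ∩ E γ τ}).toReal := by
  unfold ms
  simp only [mem_inter_iff, mem_E_iff]

lemma ms_integrable {S : Set (ℝ × ℝ)} (hS : MeasurableSet S) (γ τ : ℝ) :
    Integrable (ms S γ τ) := by
  have := (slice (hS.inter (measurableSet_E γ τ))
    ((measure_mono inter_subset_right).trans_lt (E_finite γ τ)).ne).1
  exact this.congr (Eventually.of_forall fun z => (ms_eq S γ τ z).symm)

lemma Ar_half {S : Set (ℝ × ℝ)} (hS : MeasurableSet S) (γ τ τ₀ : ℝ) :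
    Ar (S ∩ {p | τ₀ < p.2}) γ τ = ∫ z in Ioi τ₀, ms S γ τ z := by
  have hh : MeasurableSet {p : ℝ × ℝ | τ₀ < p.2} :=
    (isOpen_lt continuous_const continuous_snd).measurableSet
  have := (slice ((hS.inter hh).inter (measurableSet_E γ τ))
    ((measure_mono inter_subset_right).trans_lt (E_finite γ τ)).ne).2
  unfold Ar
  rw [this, ← integral_indicator measurableSet_Ioi]
  congr 1
  ext z
  by_cases hz : τ₀ < z
  · rw [indicator_of_mem (by exact hz), ms_eq]
    congr 2
    ext r
    simp only [mem_inter_iff, mem_ofPred_eq, hz, and_true]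
  · rw [indicator_of_notMem (by exact hz)]
    have : {r : ℝ | (r, z) ∈ (S ∩ {p | τ₀ < p.2}) ∩ E γ τ} = ∅ := by
      ext r
      simp [hz]
    rw [this]; simp

lemma Ar_cut_eq {S : Set (ℝ × ℝ)} (hS : MeasurableSet S) (γ τ : ℝ) :
    Ar (S ∩ {p | τ < p.2}) γ τ = Ar (S ∩ {p | 0 < p.2}) γ τ - ∫ z in (0:ℝ)..τ, ms S γ τ z := by
  rw [Ar_half hS, Ar_half hS]
  have h := ms_integrable hS γ τ
  have := intervalIntegral.integral_Ioi_sub_Ioi' (a := 0) (b := τ) h.integrableOn h.integrableOn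
  linarith

lemma int_max (τ : ℝ) : ∫ z in (0:ℝ)..τ, max z 0 = (max τ 0) ^ 2 / 2 := by
  rcases le_total 0 τ with h | h
  · rw [max_eq_left h]
    have : ∫ z in (0:ℝ)..τ, max z 0 = ∫ z in (0:ℝ)..τ, z := by
      apply intervalIntegral.integral_congr
      intro z hz
      rw [uIcc_of_le h] at hz
      exact max_eq_left hz.1
    rw [this]; simp
  · rw [max_eq_right h]
    have : ∫ z in (0:ℝ)..τ, max z 0 = ∫ z in (0:ℝ)..τ, (0:ℝ) := by
      apply intervalIntegral.integral_congr
      intro z hz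
      rw [uIcc_of_ge h] at hz
      exact max_eq_right hz.2
    rw [this]; simp

noncomputable def J (γ τ : ℝ) : ℝ :=
  ∫ x in Ioc (0:ℝ) 1, √(1 - τ ^ 2 * (x ^ 2 + γ ^ 2 * (x - 1) ^ 2))

lemma J_contDiffAt (γ : ℝ) : ContDiffAt ℝ 2 (J γ) 0 := by
  have hO : IsOpen {τ : ℝ | 4 * (1 + γ ^ 2) * τ ^ 2 < 1} := isOpen_lt (by fun_prop) (by fun_prop)
  have hn : {τ : ℝ | 4 * (1 + γ ^ 2) * τ ^ 2 < 1} ∈ 𝓝 (0:ℝ) := hO.mem_nhds (by simp)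
  have key := param_contDiff (V := Ioo (-1) 2) (I := {τ : ℝ | 4 * (1 + γ ^ 2) * τ ^ 2 < 1})
    (a := 0) (b := 1) (T := Ioc (0:ℝ) 1)
    (fun x hx => ⟨by linarith [hx.1], by linarith [hx.2]⟩) isOpen_Ioo hO measurableSet_Ioc
    Ioc_subset_Icc_self 2
    (f := fun p => √(1 - p.2 ^ 2 * (p.1 ^ 2 + γ ^ 2 * (p.1 - 1) ^ 2))) (by
      rintro ⟨x, τ⟩ ⟨⟨hx1, hx2⟩, hτ⟩
      simp only [mem_ofPred_eq] at hx1 hx2 hτ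
      apply ContDiffAt.contDiffWithinAt
      apply ContDiffAt.sqrt (by fun_prop)
      simp only
      have h1 : x ^ 2 ≤ 4 := by nlinarith
      have h2 : (x - 1) ^ 2 ≤ 4 := by nlinarith
      have h3 : x ^ 2 + γ ^ 2 * (x - 1) ^ 2 ≤ 4 * (1 + γ ^ 2) := by nlinarith [sq_nonneg γ]
      have := mul_le_mul_of_nonneg_left h3 (sq_nonneg τ)
      linarith)
  exact key.contDiffAt hn

lemma int_R (γ τ : ℝ) :
    ∫ z in (0:ℝ)..τ, √(1 - z ^ 2 - γ ^ 2 * (z - τ) ^ 2) = τ * J γ τ := by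
  have := intervalIntegral.mul_integral_comp_mul_left (a := 0) (b := 1) (c := τ)
    (f := fun z => √(1 - z ^ 2 - γ ^ 2 * (z - τ) ^ 2))
  rw [mul_zero, mul_one] at this
  rw [← this, J, ← intervalIntegral.integral_of_le zero_le_one]
  congr 2
  ext x
  congr 1; ring

lemma Ar_cut {S : Set (ℝ × ℝ)} (hS : MeasurableSet S)
    (hcone : ∀ r : ℝ, 0 < r → ∀ p : ℝ × ℝ, (r * p.1, r * p.2) ∈ S ↔ p ∈ S)
    {a c₁ c₂ ε α β : ℝ} (hW : Wedge S a c₁ c₂ ε α β) (γ : ℝ) :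
    ∃ H : ℝ → ℝ, ContDiffAt ℝ 2 H 0 ∧ ∀ᶠ τ in 𝓝 (0:ℝ),
      Ar (S ∩ {p | τ < p.2}) γ τ = H τ - ε * (β - α) / 2 * (max τ 0) ^ 2 := by
  have hh : MeasurableSet {p : ℝ × ℝ | 0 < p.2} :=
    (isOpen_lt continuous_const continuous_snd).measurableSet
  refine ⟨fun τ => Ar (S ∩ {p | 0 < p.2}) γ τ - (a * (τ * J γ τ) + (c₁ * α + c₂ * β) * (τ ^ 2 / 2)),
    ?_, ?_⟩
  · have h1 := Ar_contDiffAt (S := S ∩ {p | 0 < p.2}) (hS.inter hh) (by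
      intro r hr p
      simp only [mem_inter_iff, hcone r hr, mem_ofPred_eq, mul_pos_iff_of_pos_left hr]) γ
    have h2 := J_contDiffAt γ
    fun_prop
  · have e1 : ∀ᶠ τ in 𝓝 (0:ℝ), (1 + γ ^ 2) * τ ^ 2 < 3 / 4 :=
      ContinuousAt.eventually_lt (by fun_prop) (by fun_prop) (by norm_num)
    have e2 : ∀ᶠ τ in 𝓝 (0:ℝ), |α| * |τ| < 1 / 2 :=
      ContinuousAt.eventually_lt (by fun_prop) (by fun_prop) (by norm_num)
    have e3 : ∀ᶠ τ in 𝓝 (0:ℝ), |β| * |τ| < 1 / 2 :=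
      ContinuousAt.eventually_lt (by fun_prop) (by fun_prop) (by norm_num)
    filter_upwards [e1, e2, e3] with τ h1 h2 h3
    rw [Ar_cut_eq hS]
    have hm : ∫ z in (0:ℝ)..τ, ms S γ τ z = ∫ z in (0:ℝ)..τ,
        (a * √(1 - z ^ 2 - γ ^ 2 * (z - τ) ^ 2) + (c₁ * α + c₂ * β) * z +
          ε * (β - α) * max z 0) := by
      apply intervalIntegral.integral_congr
      intro z hz
      have hz1 : |z| ≤ |τ| := by
        rcases le_total 0 τ with h | h
        · rw [uIcc_of_le h] at hz
          rw [abs_of_nonneg hz.1, abs_of_nonneg h]; exact hz.2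
        · rw [uIcc_of_ge h] at hz
          rw [abs_of_nonpos hz.2, abs_of_nonpos h]; linarith [hz.1]
      have hz2 : |z - τ| ≤ |τ| := by
        rcases le_total 0 τ with h | h
        · rw [uIcc_of_le h] at hz
          rw [abs_of_nonpos (by linarith [hz.2]), abs_of_nonneg h]; linarith [hz.1]
        · rw [uIcc_of_ge h] at hz
          rw [abs_of_nonneg (by linarith [hz.1]), abs_of_nonpos h]; linarith [hz.2]
      have hz3 : z ^ 2 ≤ τ ^ 2 := sq_le_sq.2 hz1
      have hz4 : (z - τ) ^ 2 ≤ τ ^ 2 := sq_le_sq.2 hz2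
      have hR : 1 / 2 ≤ √(1 - z ^ 2 - γ ^ 2 * (z - τ) ^ 2) := by
        apply Real.le_sqrt_of_sq_le
        nlinarith [mul_le_mul_of_nonneg_left hz4 (sq_nonneg γ)]
      have hmx : |max z 0| ≤ |τ| := by
        rcases le_total 0 z with h | h
        · rwa [max_eq_left h]
        · rw [max_eq_right h]; simp
      have hL : ∀ c x : ℝ, |c| * |τ| < 1 / 2 → |x| ≤ |τ| →
          L (√(1 - z ^ 2 - γ ^ 2 * (z - τ) ^ 2)) (c * x) = c * x := by
        intro c x hc hx
        apply L_of_abs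
        rw [abs_mul]
        have := mul_le_mul_of_nonneg_left hx (abs_nonneg c)
        linarith
      have := hW _ (Real.sqrt_nonneg (1 - z ^ 2 - γ ^ 2 * (z - τ) ^ 2)) z
      rw [hL α z h2 hz1, hL β z h3 hz1, hL α _ h2 hmx, hL β _ h3 hmx] at this
      simp only [ms]
      rw [this]; ring
    have i1 : IntervalIntegrable (fun z => a * √(1 - z ^ 2 - γ ^ 2 * (z - τ) ^ 2)) volume 0 τ :=
      Continuous.intervalIntegrable (by fun_prop) _ _
    have i2 : IntervalIntegrable (fun z => (c₁ * α + c₂ * β) * z) volume 0 τ :=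
      Continuous.intervalIntegrable (by fun_prop) _ _
    have i3 : IntervalIntegrable (fun z => ε * (β - α) * max z 0) volume 0 τ :=
      Continuous.intervalIntegrable (by fun_prop) _ _
    rw [hm, intervalIntegral.integral_add (i1.add i2) i3, intervalIntegral.integral_add i1 i2,
      intervalIntegral.integral_const_mul, intervalIntegral.integral_const_mul,
      intervalIntegral.integral_const_mul, int_R, int_max, integral_id]
    ring

noncomputable def Rr (p : ℝ × ℝ) : ℝ := √(1 - p.1 ^ 2 - p.2 ^ 2)

lemma Rr_cont : Continuous Rr := by unfold Rr; fun_prop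

lemma Rr_nonneg (p : ℝ × ℝ) : 0 ≤ Rr p := Real.sqrt_nonneg _

lemma Rr_zero {p : ℝ × ℝ} (hp : p ∉ Icc (-1 : ℝ) 1 ×ˢ Icc (-1 : ℝ) 1) : Rr p = 0 := by
  apply Real.sqrt_eq_zero_of_nonpos
  by_contra! h
  apply hp
  exact ⟨abs_le.1 ((sq_le_one_iff_abs_le_one p.1).1 (by nlinarith [sq_nonneg p.2])),
    abs_le.1 ((sq_le_one_iff_abs_le_one p.2).1 (by nlinarith [sq_nonneg p.1]))⟩

lemma int_L (R lo hi : ℝ) :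
    ∫ r in lo..hi, ({r : ℝ | |r| < R}.indicator (fun _ => (1:ℝ)) r) = L R hi - L R lo := by
  have hm : MeasurableSet {r : ℝ | |r| < R} :=
    (isOpen_lt (by fun_prop) (by fun_prop)).measurableSet
  have key : ∀ lo hi : ℝ, lo ≤ hi →
      ∫ r in lo..hi, ({r : ℝ | |r| < R}.indicator (fun _ => (1:ℝ)) r) = L R hi - L R lo := by
    intro lo hi h
    rw [intervalIntegral.integral_of_le h, ← integral_Icc_eq_integral_Ioc,
      setIntegral_indicator hm, ← vol_seg h]
    simp [Measure.real]
    rfl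
  rcases le_total lo hi with h | h
  · exact key lo hi h
  · rw [intervalIntegral.integral_symm, key hi lo h]; ring

lemma ptw (R γ z t : ℝ) :
    γ * ∫ τ in (0:ℝ)..t, ({τ : ℝ | |γ * (z - τ)| < R}.indicator (fun _ => (1:ℝ)) τ) =
      L R (γ * z) - L R (γ * (z - t)) := by
  have := intervalIntegral.mul_integral_comp_sub_mul (a := 0) (b := t) (c := γ) (d := γ * z)
    (f := {r : ℝ | |r| < R}.indicator (fun _ => (1:ℝ)))
  rw [int_L, mul_zero, sub_zero, ← mul_sub] at this
  rw [← this]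
  congr 2
  ext τ
  simp only [indicator, mem_ofPred_eq, mul_sub]

lemma ptw_plus (R γ z t : ℝ) :
    γ * ∫ τ in (0:ℝ)..t, ({τ : ℝ | τ < z ∧ |γ * (z - τ)| < R}.indicator (fun _ => (1:ℝ)) τ) =
      L R (γ * max z 0) - L R (γ * max (z - t) 0) := by
  have hm : MeasurableSet {τ : ℝ | |γ * (z - τ)| < R} :=
    (isOpen_lt (by fun_prop) (by fun_prop)).measurableSet
  have hm' : MeasurableSet {τ : ℝ | τ < z ∧ |γ * (z - τ)| < R} :=
    (measurableSet_Iio (a := z)).inter hm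
  set F := {τ : ℝ | |γ * (z - τ)| < R}.indicator (fun _ => (1:ℝ)) with hF
  set G := {τ : ℝ | τ < z ∧ |γ * (z - τ)| < R}.indicator (fun _ => (1:ℝ)) with hG
  have iF : ∀ a b, IntervalIntegrable F volume a b := fun a b =>
    ⟨(integrable_const (1:ℝ)).indicator hm, (integrable_const (1:ℝ)).indicator hm⟩
  have iG : ∀ a b, IntervalIntegrable G volume a b := fun a b =>
    ⟨(integrable_const (1:ℝ)).indicator hm', (integrable_const (1:ℝ)).indicator hm'⟩
  have key : ∀ u, ∫ τ in z..u, G τ = ∫ τ in z..(min u z), F τ := by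
    intro u
    rcases le_total u z with h | h
    · rw [min_eq_left h]
      rw [intervalIntegral.integral_symm, intervalIntegral.integral_symm u z]
      congr 1
      rw [intervalIntegral.integral_of_le h, intervalIntegral.integral_of_le h,
        integral_Ioc_eq_integral_Ioo, integral_Ioc_eq_integral_Ioo]
      apply setIntegral_congr_fun measurableSet_Ioo
      intro τ hτ
      simp only [hF, hG, indicator, mem_ofPred_eq, hτ.2, true_and]
    · rw [min_eq_right h, intervalIntegral.integral_same]
      rw [intervalIntegral.integral_of_le h]
      rw [setIntegral_congr_fun (g := fun _ => (0:ℝ)) measurableSet_Ioc]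
      · simp
      intro τ hτ
      simp only [hG, indicator, mem_ofPred_eq]
      rw [if_neg]
      rintro ⟨h1, -⟩
      exact absurd hτ.1 (not_lt.2 h1.le)
  have hmax : ∀ u, max (z - u) 0 = z - min u z := by
    intro u
    rcases le_total u z with h | h
    · rw [min_eq_left h, max_eq_left (by linarith)]
    · rw [min_eq_right h, max_eq_right (by linarith)]; ring
  have e1 : ∫ τ in (0:ℝ)..t, G τ = (∫ τ in (0:ℝ)..(min t z), F τ) - ∫ τ in (0:ℝ)..(min 0 z), F τ := by
    rw [← intervalIntegral.integral_interval_sub_left (iG z t) (iG z 0), key, key,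
      intervalIntegral.integral_interval_sub_left (iF _ _) (iF _ _),
      intervalIntegral.integral_interval_sub_left (iF _ _) (iF _ _)]
  have h0 := hmax 0
  rw [sub_zero] at h0
  rw [e1, mul_sub, ptw, ptw, h0, hmax]
  ring

lemma swap_lemma {S : Set (ℝ × ℝ)} (hS : MeasurableSet S) {Φ : Set (ℝ × (ℝ × ℝ))}
    (hΦ : MeasurableSet Φ) (hsub : Φ ⊆ univ ×ˢ (Icc (-1 : ℝ) 1 ×ˢ Icc (-1 : ℝ) 1)) (t : ℝ) :
    ∫ τ in (0:ℝ)..t, (volume (S ∩ {p | (τ, p) ∈ Φ})).toReal =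
      ∫ p in S, ∫ τ in (0:ℝ)..t, ({τ : ℝ | (τ, p) ∈ Φ}.indicator (fun _ => (1:ℝ)) τ) := by
  have hi : Integrable (Function.uncurry fun (τ : ℝ) (p : ℝ × ℝ) =>
      ({τ : ℝ | (τ, p) ∈ Φ}.indicator (fun _ => (1:ℝ)) τ))
      ((volume.restrict (uIoc 0 t)).prod (volume.restrict S)) := by
    have : (Function.uncurry fun (τ : ℝ) (p : ℝ × ℝ) =>
      ({τ : ℝ | (τ, p) ∈ Φ}.indicator (fun _ => (1:ℝ)) τ)) = Φ.indicator (fun _ => (1:ℝ)) := by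
      ext ⟨τ, p⟩; rfl
    rw [this, integrable_indicator_iff hΦ]
    apply integrableOn_const
    · refine ((measure_mono hsub).trans_lt ?_).ne
      rw [Measure.prod_prod]
      apply ENNReal.mul_lt_top
      · simp [uIoc]
      · exact (Measure.restrict_apply_le _ _).trans_lt
          (isCompact_Icc.prod isCompact_Icc).measure_lt_top
    · simp
  rw [← intervalIntegral_integral_swap hi]
  congr 1
  ext τ
  have hm : MeasurableSet {p : ℝ × ℝ | (τ, p) ∈ Φ} := measurable_prodMk_left hΦ
  have : (fun p : ℝ × ℝ => ({τ : ℝ | (τ, p) ∈ Φ}.indicator (fun _ => (1:ℝ)) τ)) =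
    {p : ℝ × ℝ | (τ, p) ∈ Φ}.indicator (fun _ => (1:ℝ)) := by
    ext p; rfl
  rw [this, setIntegral_indicator hm]
  simp [Measure.real]

noncomputable def Tz (S : Set (ℝ × ℝ)) (γ t : ℝ) : ℝ := ∫ p in S, L (Rr p) (γ * (p.2 - t))
noncomputable def Tp (S : Set (ℝ × ℝ)) (γ t : ℝ) : ℝ := ∫ p in S, L (Rr p) (γ * max (p.2 - t) 0)

lemma L_at_zero (x : ℝ) : L 0 x = 0 := by
  unfold L
  rw [neg_zero]
  exact max_eq_left (min_le_left _ _)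

lemma integrable_L (S : Set (ℝ × ℝ)) {f : ℝ × ℝ → ℝ} (hf : Continuous f) :
    Integrable (fun p => L (Rr p) (f p)) (volume.restrict S) := by
  apply Integrable.restrict
  apply Continuous.integrable_of_hasCompactSupport
  · have := Rr_cont
    unfold L; fun_prop
  · refine HasCompactSupport.intro (K := Icc (-1:ℝ) 1 ×ˢ Icc (-1:ℝ) 1)
      (isCompact_Icc.prod isCompact_Icc) (fun p hp => ?_)
    · rw [Rr_zero hp, L_at_zero]

lemma integrable_Rr (S : Set (ℝ × ℝ)) : Integrable Rr (volume.restrict S) := by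
  apply Integrable.restrict
  exact Rr_cont.integrable_of_hasCompactSupport
    (HasCompactSupport.intro (K := Icc (-1:ℝ) 1 ×ˢ Icc (-1:ℝ) 1) (isCompact_Icc.prod isCompact_Icc) (fun p hp => Rr_zero hp))

lemma measurable_Phi (γ : ℝ) : MeasurableSet {q : ℝ × (ℝ × ℝ) | q.2 ∈ E γ q.1} := by
  have : IsOpen {q : ℝ × (ℝ × ℝ) | q.2.1 ^ 2 + q.2.2 ^ 2 + γ ^ 2 * (q.2.2 - q.1) ^ 2 < 1} :=
    isOpen_lt (by fun_prop) (by fun_prop)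
  exact this.measurableSet

lemma Phi_sub (γ : ℝ) : {q : ℝ × (ℝ × ℝ) | q.2 ∈ E γ q.1} ⊆
    univ ×ˢ (Icc (-1 : ℝ) 1 ×ˢ Icc (-1 : ℝ) 1) := by
  rintro ⟨τ, y, z⟩ h
  refine ⟨trivial, ?_⟩
  by_contra hc
  have h0 := Rr_zero hc
  have := mem_E_iff'.1 h
  unfold Rr at h0
  simp only at h0
  rw [h0] at this
  exact absurd (abs_nonneg _) (not_le.2 this)

lemma Tz_eq {S : Set (ℝ × ℝ)} (hS : MeasurableSet S) (γ t : ℝ) :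
    Tz S γ t = Tz S γ 0 - γ * ∫ τ in (0:ℝ)..t, Ar S γ τ := by
  have h := swap_lemma hS (measurable_Phi γ) (Phi_sub γ) t
  have e : ∫ τ in (0:ℝ)..t, Ar S γ τ =
    ∫ τ in (0:ℝ)..t, (volume (S ∩ {p | (τ, p) ∈ {q : ℝ × (ℝ × ℝ) | q.2 ∈ E γ q.1}})).toReal := rfl
  rw [e, h, ← integral_const_mul]
  have e2 : ∀ p : ℝ × ℝ, γ * ∫ τ in (0:ℝ)..t, ({τ : ℝ | (τ, p) ∈
      {q : ℝ × (ℝ × ℝ) | q.2 ∈ E γ q.1}}.indicator (fun _ => (1:ℝ)) τ) =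
      L (Rr p) (γ * (p.2 - 0)) - L (Rr p) (γ * (p.2 - t)) := by
    rintro ⟨y, z⟩
    rw [sub_zero, ← ptw]
    simp only [mem_ofPred_eq, mem_E_iff', Rr]
  simp only [e2]
  rw [integral_sub (integrable_L S (by fun_prop)) (integrable_L S (by fun_prop))]
  unfold Tz
  ring

lemma Tp_eq {S : Set (ℝ × ℝ)} (hS : MeasurableSet S) (γ t : ℝ) :
    Tp S γ t = Tp S γ 0 - γ * ∫ τ in (0:ℝ)..t, Ar (S ∩ {p | τ < p.2}) γ τ := by
  have hm : MeasurableSet {q : ℝ × (ℝ × ℝ) | q.1 < q.2.2 ∧ q.2 ∈ E γ q.1} := by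
    have h1 : MeasurableSet {q : ℝ × (ℝ × ℝ) | q.1 < q.2.2} :=
      (isOpen_lt (by fun_prop) (by fun_prop)).measurableSet
    exact h1.inter (measurable_Phi γ)
  have h := swap_lemma hS hm (fun q hq => Phi_sub γ hq.2) t
  have e : ∫ τ in (0:ℝ)..t, Ar (S ∩ {p | τ < p.2}) γ τ =
    ∫ τ in (0:ℝ)..t, (volume (S ∩ {p | (τ, p) ∈
      {q : ℝ × (ℝ × ℝ) | q.1 < q.2.2 ∧ q.2 ∈ E γ q.1}})).toReal := by
    congr 1
    ext τ
    unfold Ar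
    rw [inter_assoc]
    rfl
  rw [e, h, ← integral_const_mul]
  have e2 : ∀ p : ℝ × ℝ, γ * ∫ τ in (0:ℝ)..t, ({τ : ℝ | (τ, p) ∈
      {q : ℝ × (ℝ × ℝ) | q.1 < q.2.2 ∧ q.2 ∈ E γ q.1}}.indicator (fun _ => (1:ℝ)) τ) =
      L (Rr p) (γ * max (p.2 - 0) 0) - L (Rr p) (γ * max (p.2 - t) 0) := by
    rintro ⟨y, z⟩
    rw [sub_zero, ← ptw_plus]
    simp only [mem_ofPred_eq, mem_E_iff', Rr]
  simp only [e2]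
  rw [integral_sub (integrable_L S (by fun_prop)) (integrable_L S (by fun_prop))]
  unfold Tp
  ring

lemma ftc {T h k : ℝ → ℝ} {γ : ℝ} (hT : ∀ t, T t = T 0 - γ * ∫ τ in (0:ℝ)..t, h τ)
    (hk : ∀ᶠ τ in 𝓝 (0:ℝ), ContinuousAt k τ) (hhk : ∀ᶠ τ in 𝓝 (0:ℝ), h τ = k τ) :
    ∀ᶠ t in 𝓝 (0:ℝ), HasDerivAt T (-γ * k t) t := by
  obtain ⟨δ, hδ, hb⟩ := Metric.mem_nhds_iff.1 (hk.and hhk)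
  have hI : IsOpen (Metric.ball (0:ℝ) δ) := Metric.isOpen_ball
  have h0 : (0:ℝ) ∈ Metric.ball (0:ℝ) δ := Metric.mem_ball_self hδ
  have hcont : ContinuousOn h (Metric.ball 0 δ) := by
    have : ContinuousOn k (Metric.ball 0 δ) := fun τ hτ => (hb hτ).1.continuousWithinAt
    exact this.congr fun τ hτ => (hb hτ).2
  filter_upwards [hI.mem_nhds h0] with t ht
  have hsub : uIcc 0 t ⊆ Metric.ball (0:ℝ) δ :=
    ((convex_ball (0:ℝ) δ).ordConnected).uIcc_subset h0 ht
  have hd := intervalIntegral.integral_hasDerivAt_right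
    (hcont.mono hsub).intervalIntegrable
    (hcont.stronglyMeasurableAtFilter hI t ht) (hcont.continuousAt (hI.mem_nhds ht))
  have := (hd.const_mul γ).const_sub (T 0)
  rw [(hb ht).2] at this
  have e : T = fun t => T 0 - γ * ∫ τ in (0:ℝ)..t, h τ := funext hT
  rw [e]
  refine this.congr_deriv ?_
  ring

lemma Tz_deriv {S : Set (ℝ × ℝ)} (hS : MeasurableSet S)
    (hcone : ∀ r : ℝ, 0 < r → ∀ p : ℝ × ℝ, (r * p.1, r * p.2) ∈ S ↔ p ∈ S) (γ : ℝ) :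
    ∀ᶠ t in 𝓝 (0:ℝ), HasDerivAt (Tz S γ) (-γ * Ar S γ t) t := by
  refine ftc (Tz_eq hS γ) ?_ (Eventually.of_forall fun _ => rfl)
  filter_upwards [(Ar_contDiffAt hS hcone γ).eventually (by simp)] with τ hτ using hτ.continuousAt

lemma Tp_deriv {S : Set (ℝ × ℝ)} (hS : MeasurableSet S)
    (hcone : ∀ r : ℝ, 0 < r → ∀ p : ℝ × ℝ, (r * p.1, r * p.2) ∈ S ↔ p ∈ S)
    {a c₁ c₂ ε α β : ℝ} (hW : Wedge S a c₁ c₂ ε α β) (γ : ℝ) :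
    ∃ H : ℝ → ℝ, ContDiffAt ℝ 2 H 0 ∧ ∀ᶠ t in 𝓝 (0:ℝ),
      HasDerivAt (Tp S γ) (-γ * (H t - ε * (β - α) / 2 * (max t 0) ^ 2)) t := by
  obtain ⟨H, hH, he⟩ := Ar_cut hS hcone hW γ
  refine ⟨H, hH, ftc (k := fun τ => H τ - ε * (β - α) / 2 * (max τ 0) ^ 2) (Tp_eq hS γ) ?_ he⟩
  filter_upwards [hH.eventually (by simp)] with τ hτ
  have := hτ.continuousAt
  fun_prop

/-- planar version of the main computation -/
lemma core {C D : Set (ℝ × ℝ)} (hC : MeasurableSet C)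
    (hcone : ∀ r : ℝ, 0 < r → ∀ p : ℝ × ℝ, (r * p.1, r * p.2) ∈ C ↔ p ∈ C)
    {a c₁ c₂ ε α β : ℝ} (hWC : Wedge C a c₁ c₂ ε α β)
    {a' c₁' c₂' ε' α' β' : ℝ} (hWD : Wedge D a' c₁' c₂' ε' α' β')
    {g : ℝ → ℝ} (hg : ∀ t, g t = ∫ p in C, (volume {r : ℝ | (r, p.2 - t) ∈ D ∧ |r| < Rr p}).toReal) :
    ∃ Lp Lm : ℝ,
      Tendsto (deriv (deriv (deriv g))) (𝓝[>] 0) (𝓝 Lp) ∧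
      Tendsto (deriv (deriv (deriv g))) (𝓝[<] 0) (𝓝 Lm) ∧
      Lp - Lm = (ε * (β - α)) * (ε' * (β' - α')) := by
  obtain ⟨H₁, hH₁, e₁⟩ := Tp_deriv hC hcone hWC α'
  obtain ⟨H₂, hH₂, e₂⟩ := Tp_deriv hC hcone hWC β'
  have d₁ := Tz_deriv hC hcone α'
  have d₂ := Tz_deriv hC hcone β'
  have hA₁ := Ar_contDiffAt hC hcone α'
  have hA₂ := Ar_contDiffAt hC hcone β'
  have hg' : g = fun t => (∫ p in C, a' * Rr p) + c₁' * Tz C α' t + c₂' * Tz C β' t +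
      ε' * (Tp C β' t - Tp C α' t) := by
    ext t
    have i1 := (integrable_Rr C).const_mul a'
    have i2 := (integrable_L C (f := fun p => α' * (p.2 - t)) (by fun_prop)).const_mul c₁'
    have i3 := (integrable_L C (f := fun p => β' * (p.2 - t)) (by fun_prop)).const_mul c₂'
    have i4 := (integrable_L C (f := fun p => β' * max (p.2 - t) 0) (by fun_prop))
    have i5 := (integrable_L C (f := fun p => α' * max (p.2 - t) 0) (by fun_prop))
    have i12 : Integrable (fun p => a' * Rr p + c₁' * L (Rr p) (α' * (p.2 - t)))
      (volume.restrict C) := i1.add i2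
    have i123 : Integrable (fun p => a' * Rr p + c₁' * L (Rr p) (α' * (p.2 - t)) +
      c₂' * L (Rr p) (β' * (p.2 - t))) (volume.restrict C) := i12.add i3
    have i6 : Integrable (fun p => ε' * (L (Rr p) (β' * max (p.2 - t) 0) -
      L (Rr p) (α' * max (p.2 - t) 0))) (volume.restrict C) := (i4.sub i5).const_mul ε'
    rw [hg]
    simp only [hWD _ (Rr_nonneg _)]
    rw [integral_add i123 i6, integral_add i12 i3, integral_add i1 i2,
      integral_const_mul c₁', integral_const_mul c₂', integral_const_mul ε',
      integral_sub i4 i5]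
    rfl
  refine third_deriv_limits (H := fun t => c₁' * (-α' * Ar C α' t) + c₂' * (-β' * Ar C β' t) +
    ε' * (-β' * H₂ t - -α' * H₁ t)) (by fun_prop) ?_
  filter_upwards [e₁, e₂, d₁, d₂] with t e₁ e₂ d₁ d₂
  rw [hg']
  have := (((d₁.const_mul c₁').const_add (∫ p in C, a' * Rr p)).add (d₂.const_mul c₂')).add
    ((e₂.sub e₁).const_mul ε')
  refine this.congr_deriv ?_
  ring

/-- planar sector -/
def Sec (p₁ q₁ p₂ q₂ : ℝ) : Set (ℝ × ℝ) :=
  {p | p₁ * p.1 + q₁ * p.2 ≤ 0 ∧ p₂ * p.1 + q₂ * p.2 ≤ 0}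

lemma Sec_closed (p₁ q₁ p₂ q₂ : ℝ) : IsClosed (Sec p₁ q₁ p₂ q₂) := by
  have key : ∀ u v : ℝ, IsClosed {p : ℝ × ℝ | u * p.1 + v * p.2 ≤ 0} := fun u v =>
    isClosed_le (by fun_prop) (by fun_prop)
  exact (key p₁ q₁).inter (key p₂ q₂)

lemma Sec_cone (p₁ q₁ p₂ q₂ : ℝ) (r : ℝ) (hr : 0 < r) (p : ℝ × ℝ) :
    (r * p.1, r * p.2) ∈ Sec p₁ q₁ p₂ q₂ ↔ p ∈ Sec p₁ q₁ p₂ q₂ := by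
  have key : ∀ u v : ℝ, u * (r * p.1) + v * (r * p.2) ≤ 0 ↔ u * p.1 + v * p.2 ≤ 0 := by
    intro u v
    have : u * (r * p.1) + v * (r * p.2) = r * (u * p.1 + v * p.2) := by ring
    rw [this, mul_nonpos_iff_pos_imp_nonpos]
    constructor
    · intro h; exact h.1 hr
    · intro h; exact ⟨fun _ => h, fun _ => hr.le⟩
  simp only [Sec, mem_ofPred_eq, key]

noncomputable def toP (x : EuclideanSpace ℝ (Fin 3)) : ℝ × (ℝ × ℝ) := (x 0, (x 1, x 2))

lemma toP_mp : MeasurePreserving toP := by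
  have h1 := EuclideanSpace.volume_preserving_symm_measurableEquiv_toLp (Fin 3)
  have h2 := volume_preserving_piFinSuccAbove (fun _ : Fin 3 => ℝ) 0
  have h3 := (MeasurePreserving.id (volume : Measure ℝ)).prod (volume_preserving_finTwoArrow ℝ)
  have := h3.comp (h2.comp h1)
  exact this

/-- the spatial region -/
def Qs (C D : Set (ℝ × ℝ)) (t : ℝ) : Set (ℝ × (ℝ × ℝ)) :=
  {q | q.2 ∈ C ∧ (q.1, q.2.2 - t) ∈ D ∧ |q.1| < Rr q.2}

lemma Qs_meas {C D : Set (ℝ × ℝ)} (hC : MeasurableSet C) (hD : MeasurableSet D) (t : ℝ) :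
    MeasurableSet (Qs C D t) := by
  have h1 : MeasurableSet {q : ℝ × (ℝ × ℝ) | q.2 ∈ C} := measurable_snd hC
  have h2 : MeasurableSet {q : ℝ × (ℝ × ℝ) | (q.1, q.2.2 - t) ∈ D} := by
    have : Measurable fun q : ℝ × (ℝ × ℝ) => (q.1, q.2.2 - t) := by fun_prop
    exact this hD
  have h3 : MeasurableSet {q : ℝ × (ℝ × ℝ) | |q.1| < Rr q.2} :=
    (isOpen_lt (by fun_prop) (Rr_cont.comp continuous_snd)).measurableSet
  exact h1.inter (h2.inter h3)

lemma Qs_fin (C D : Set (ℝ × ℝ)) (t : ℝ) : volume (Qs C D t) ≠ ⊤ := by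
  have hs : Qs C D t ⊆ Icc (-1 : ℝ) 1 ×ˢ (Icc (-1 : ℝ) 1 ×ˢ Icc (-1 : ℝ) 1) := by
    rintro ⟨x, p⟩ ⟨-, -, h⟩
    simp only at h
    refine ⟨?_, ?_⟩
    · have : Rr p ≤ 1 := by
        unfold Rr
        apply Real.sqrt_le_one.2
        nlinarith [sq_nonneg p.1, sq_nonneg p.2]
      exact abs_le.1 (h.le.trans this)
    · by_contra hc
      rw [Rr_zero hc] at h
      exact absurd (abs_nonneg _) (not_le.2 h)
  exact ((measure_mono hs).trans_lt
    (isCompact_Icc.prod (isCompact_Icc.prod isCompact_Icc)).measure_lt_top).ne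

lemma Qs_int {C D : Set (ℝ × ℝ)} (hC : MeasurableSet C) (hD : MeasurableSet D) (t : ℝ) :
    (volume (Qs C D t)).toReal =
      ∫ p in C, (volume {r : ℝ | (r, p.2 - t) ∈ D ∧ |r| < Rr p}).toReal := by
  rw [(slice (Qs_meas hC hD t) (Qs_fin C D t)).2, ← integral_indicator hC]
  congr 1
  ext p
  by_cases hp : p ∈ C
  · simp [hp, Qs]
  · simp [hp, Qs]

lemma inner3 (a x : EuclideanSpace ℝ (Fin 3)) :
    @inner ℝ _ _ a x = a 0 * x 0 + a 1 * x 1 + a 2 * x 2 := by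
  rw [PiLp.inner_apply, Fin.sum_univ_three]
  simp [mul_comm]

lemma ball3 (x : EuclideanSpace ℝ (Fin 3)) :
    x ∈ Metric.ball (0 : EuclideanSpace ℝ (Fin 3)) 1 ↔ |x 0| < Rr (x 1, x 2) := by
  rw [mem_ball_zero_iff, EuclideanSpace.norm_eq, Fin.sum_univ_three]
  unfold Rr
  simp only [Real.norm_eq_abs, sq_abs]
  rw [Real.lt_sqrt (abs_nonneg _), sq_abs, Real.sqrt_lt' one_pos]
  constructor <;> intro h <;> linarith

lemma reduce {a₁ a₂ b₁ b₂ : EuclideanSpace ℝ (Fin 3)}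
    (ha₁ : a₁ 0 = 0) (ha₂ : a₂ 0 = 0) (hb₁ : b₁ 1 = 0) (hb₂ : b₂ 1 = 0)
    {C D : Set (EuclideanSpace ℝ (Fin 3))}
    (hC : C = {x | @inner ℝ _ _ a₁ x ≤ (0 : ℝ) ∧ @inner ℝ _ _ a₂ x ≤ (0 : ℝ)})
    (hD : D = {x | @inner ℝ _ _ b₁ x ≤ (0 : ℝ) ∧ @inner ℝ _ _ b₂ x ≤ (0 : ℝ)}) (t : ℝ) :
    C ∩ ((t • EuclideanSpace.single (2 : Fin 3) (1 : ℝ) + ·) '' D) ∩ Metric.ball 0 1 =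
      toP ⁻¹' Qs (Sec (a₁ 1) (a₁ 2) (a₂ 1) (a₂ 2)) (Sec (b₁ 0) (b₁ 2) (b₂ 0) (b₂ 2)) t := by
  ext x
  rw [Set.image_add_left, hC, hD]
  simp only [mem_inter_iff, ball3, mem_preimage, mem_ofPred_eq, Qs, toP, Sec, inner3, ha₁, ha₂,
    hb₁, hb₂]
  simp [add_comm, sub_eq_add_neg, and_assoc]

lemma eq_zero3 {x : EuclideanSpace ℝ (Fin 3)} (h0 : x 0 = 0) (h1 : x 1 = 0) (h2 : x 2 = 0) :
    x = 0 := by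
  ext k
  fin_cases k
  · exact h0
  · exact h1
  · exact h2

lemma nondeg (i : Fin 3) (j : Fin 3) {a₁ a₂ : EuclideanSpace ℝ (Fin 3)}
    (hij : (i = 0 ∧ j = 1) ∨ (i = 1 ∧ j = 0))
    (ha : LinearIndependent ℝ ![a₁, a₂]) (ha₁ : a₁ i = 0) (ha₂ : a₂ i = 0)
    {C : Set (EuclideanSpace ℝ (Fin 3))}
    (hCfac : ¬(C ∩ {x | @inner ℝ _ _ a₁ x = (0 : ℝ)} ⊆ {x | x 2 = 0}) ∧
      ¬(C ∩ {x | @inner ℝ _ _ a₂ x = (0 : ℝ)} ⊆ {x | x 2 = 0})) :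
    a₁ j ≠ 0 ∧ a₂ j ≠ 0 ∧ a₁ j * a₂ 2 - a₂ j * a₁ 2 ≠ 0 := by
  have hlin := LinearIndependent.pair_iff.1 ha
  have hj : ∀ a : EuclideanSpace ℝ (Fin 3), a i = 0 → a ≠ 0 →
      ¬(C ∩ {x | @inner ℝ _ _ a x = (0 : ℝ)} ⊆ {x | x 2 = 0}) → a j ≠ 0 := by
    intro a hai ha0 hn hc
    apply hn
    rintro x ⟨-, hx⟩
    have ha2 : a 2 ≠ 0 := by
      intro h2
      apply ha0
      rcases hij with ⟨rfl, rfl⟩ | ⟨rfl, rfl⟩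
      · exact eq_zero3 hai hc h2
      · exact eq_zero3 hc hai h2
    rw [mem_ofPred_eq, inner3] at hx
    have hx2 : a 2 * x 2 = 0 := by
      rcases hij with ⟨rfl, rfl⟩ | ⟨rfl, rfl⟩
      · rw [hai, hc] at hx; linarith
      · rw [hai, hc] at hx; linarith
    exact (mul_eq_zero.1 hx2).resolve_left ha2
  have h10 : a₁ ≠ 0 := by
    rintro rfl
    have := hlin 1 0 (by simp)
    simp at this
  have h20 : a₂ ≠ 0 := by
    rintro rfl
    have := hlin 0 1 (by simp)
    simp at this
  have h1 := hj a₁ ha₁ h10 hCfac.1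
  have h2 := hj a₂ ha₂ h20 hCfac.2
  refine ⟨h1, h2, fun hd => h2 ?_⟩
  refine (hlin (a₂ j) (-a₁ j) ?_).1
  have hc : ∀ k, (a₂ j • a₁ + -a₁ j • a₂) k = a₂ j * a₁ k - a₁ j * a₂ k := by
    intro k
    simp only [PiLp.add_apply, PiLp.smul_apply, smul_eq_mul]
    ring
  have hci : (a₂ j • a₁ + -a₁ j • a₂) i = 0 := by rw [hc, ha₁, ha₂]; ring
  have hcj : (a₂ j • a₁ + -a₁ j • a₂) j = 0 := by rw [hc]; ring
  have hc2 : (a₂ j • a₁ + -a₁ j • a₂) 2 = 0 := by rw [hc]; linarith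
  rcases hij with ⟨rfl, rfl⟩ | ⟨rfl, rfl⟩
  · exact eq_zero3 hci hcj hc2
  · exact eq_zero3 hcj hci hc2

end Dih

/-- Discontinuity of the third derivative of `t ↦ λ₃(C ∩ (D + (0,0,t)) ∩ B(0,1))` at
`t = 0`, for dihedral cones `C` (with edge the `x₁`-axis) and `D` (with edge the
`x₂`-axis) none of whose facets lies in `{x₃ = 0}`. -/
theorem third_derivative_discontinuous_dihedral
    (a₁ a₂ b₁ b₂ : EuclideanSpace ℝ (Fin 3))
    (ha : LinearIndependent ℝ ![a₁, a₂]) (hb : LinearIndependent ℝ ![b₁, b₂])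
    -- the edge of `C` is the `x₁`-axis, the edge of `D` is the `x₂`-axis
    (ha₁ : a₁ 0 = 0) (ha₂ : a₂ 0 = 0) (hb₁ : b₁ 1 = 0) (hb₂ : b₂ 1 = 0)
    (C D : Set (EuclideanSpace ℝ (Fin 3)))
    (hC : C = {x | @inner ℝ _ _ a₁ x ≤ (0 : ℝ) ∧ @inner ℝ _ _ a₂ x ≤ (0 : ℝ)})
    (hD : D = {x | @inner ℝ _ _ b₁ x ≤ (0 : ℝ) ∧ @inner ℝ _ _ b₂ x ≤ (0 : ℝ)})
    -- no facet of `C` or of `D` is contained in `{x₃ = 0}`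
    (hCfac : ¬(C ∩ {x | @inner ℝ _ _ a₁ x = (0 : ℝ)} ⊆ {x | x 2 = 0}) ∧
      ¬(C ∩ {x | @inner ℝ _ _ a₂ x = (0 : ℝ)} ⊆ {x | x 2 = 0}))
    (hDfac : ¬(D ∩ {x | @inner ℝ _ _ b₁ x = (0 : ℝ)} ⊆ {x | x 2 = 0}) ∧
      ¬(D ∩ {x | @inner ℝ _ _ b₂ x = (0 : ℝ)} ⊆ {x | x 2 = 0}))
    (g : ℝ → ℝ)
    (hg : ∀ t : ℝ, g t =
      (volume (C ∩ ((t • EuclideanSpace.single (2 : Fin 3) (1 : ℝ) + ·) '' D) ∩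
        Metric.ball 0 1)).toReal) :
    ¬ContinuousAt (deriv (deriv (deriv g))) 0 ∧
    (((C ∩ {x | 0 < x 2}).Nonempty ∧ (C ∩ {x | x 2 < 0}).Nonempty ∧
      (D ∩ {x | 0 < x 2}).Nonempty ∧ (D ∩ {x | x 2 < 0}).Nonempty) →
      ∃ Lp Lm : ℝ,
        Filter.Tendsto (deriv (deriv (deriv g))) (nhdsWithin 0 (Set.Ioi 0)) (nhds Lp) ∧
        Filter.Tendsto (deriv (deriv (deriv g))) (nhdsWithin 0 (Set.Iio 0)) (nhds Lm) ∧
        Lm < Lp) ∧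
    (((C ∩ {x | 0 < x 2}).Nonempty ∧ (C ∩ {x | x 2 < 0}).Nonempty ∧
      D ⊆ {x | 0 ≤ x 2}) →
      ∃ Lp Lm : ℝ,
        Filter.Tendsto (deriv (deriv (deriv g))) (nhdsWithin 0 (Set.Ioi 0)) (nhds Lp) ∧
        Filter.Tendsto (deriv (deriv (deriv g))) (nhdsWithin 0 (Set.Iio 0)) (nhds Lm) ∧
        Lp < Lm) := by
  classical
  obtain ⟨ha1, ha2, had⟩ := Dih.nondeg 0 1 (Or.inl ⟨rfl, rfl⟩) ha ha₁ ha₂ hCfac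
  obtain ⟨hb1, hb2, hbd⟩ := Dih.nondeg 1 0 (Or.inr ⟨rfl, rfl⟩) hb hb₁ hb₂ hDfac
  obtain ⟨a, c₁, c₂, ε, α, β, hW, hαβ, ht⟩ :=
    Dih.classify ha1 ha2 had (Dih.Sec (a₁ 1) (a₁ 2) (a₂ 1) (a₂ 2)) rfl
  obtain ⟨a', c₁', c₂', ε', α', β', hW', hαβ', ht'⟩ :=
    Dih.classify hb1 hb2 hbd (Dih.Sec (b₁ 0) (b₁ 2) (b₂ 0) (b₂ 2)) rfl
  have hmC := (Dih.Sec_closed (a₁ 1) (a₁ 2) (a₂ 1) (a₂ 2)).measurableSet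
  have hmD := (Dih.Sec_closed (b₁ 0) (b₁ 2) (b₂ 0) (b₂ 2)).measurableSet
  obtain ⟨Lp, Lm, hp, hm, hj⟩ := Dih.core hmC (Dih.Sec_cone _ _ _ _) hW hW' (g := g) (by
    intro t
    rw [hg, Dih.reduce ha₁ ha₂ hb₁ hb₂ hC hD,
      Dih.toP_mp.measure_preimage (Dih.Qs_meas hmC hmD t).nullMeasurableSet, Dih.Qs_int hmC hmD])
  have hCs : ∀ x, x ∈ C → (x 1, x 2) ∈ Dih.Sec (a₁ 1) (a₁ 2) (a₂ 1) (a₂ 2) := by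
    intro x hx
    rw [hC, Set.mem_ofPred_eq, Dih.inner3, Dih.inner3, ha₁, ha₂] at hx
    simpa [Dih.Sec] using hx
  have hDs : ∀ x, x ∈ D ↔ (x 0, x 2) ∈ Dih.Sec (b₁ 0) (b₁ 2) (b₂ 0) (b₂ 2) := by
    intro x
    rw [hD, Set.mem_ofPred_eq, Dih.inner3, Dih.inner3, hb₁, hb₂]
    simp [Dih.Sec]
  have hεC : (C ∩ {x | 0 < x 2}).Nonempty → (C ∩ {x | x 2 < 0}).Nonempty → ε = -1 := by
    rintro ⟨x, hx, hx2⟩ ⟨y, hy, hy2⟩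
    simp only [Set.mem_ofPred_eq] at hx2 hy2
    rcases ht with ⟨-, h | h⟩ | ⟨h, -⟩
    · exact absurd (h _ (hCs y hy)) (not_le.2 hy2)
    · exact absurd (h _ (hCs x hx)) (not_le.2 hx2)
    · exact h
  have hεD : (D ∩ {x | 0 < x 2}).Nonempty → (D ∩ {x | x 2 < 0}).Nonempty → ε' = -1 := by
    rintro ⟨x, hx, hx2⟩ ⟨y, hy, hy2⟩
    simp only [Set.mem_ofPred_eq] at hx2 hy2
    rcases ht' with ⟨-, h | h⟩ | ⟨h, -⟩
    · exact absurd (h _ ((hDs y).1 hy)) (not_le.2 hy2)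
    · exact absurd (h _ ((hDs x).1 hx)) (not_le.2 hx2)
    · exact h
  have hεD' : D ⊆ {x | 0 ≤ x 2} → ε' = 1 := by
    intro hs
    rcases ht' with ⟨h, -⟩ | ⟨-, p, hpS, hp2⟩
    · exact h
    · have hmem : (!₂[p.1, 0, p.2] : EuclideanSpace ℝ (Fin 3)) ∈ D := by
        rw [hDs]; simpa using hpS
      have := hs hmem
      simp at this
      linarith
  have hne : ε ≠ 0 ∧ ε' ≠ 0 := by
    constructor
    · rcases ht with ⟨h, -⟩ | ⟨h, -⟩ <;> rw [h] <;> norm_num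
    · rcases ht' with ⟨h, -⟩ | ⟨h, -⟩ <;> rw [h] <;> norm_num
  have hpos : 0 < (β - α) * (β' - α') := mul_pos (sub_pos.2 hαβ) (sub_pos.2 hαβ')
  refine ⟨fun hcont => ?_, ?_, ?_⟩
  · have e1 := tendsto_nhds_unique hp (hcont.tendsto.mono_left nhdsWithin_le_nhds)
    have e2 := tendsto_nhds_unique hm (hcont.tendsto.mono_left nhdsWithin_le_nhds)
    have h0 : ε * ε' * ((β - α) * (β' - α')) = 0 := by
      rw [e1, e2, sub_self] at hj
      rw [hj]; ring
    exact (mul_ne_zero (mul_ne_zero hne.1 hne.2) hpos.ne') h0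
  · rintro ⟨h1, h2, h3, h4⟩
    refine ⟨Lp, Lm, hp, hm, ?_⟩
    rw [hεC h1 h2, hεD h3 h4] at hj
    linarith
  · rintro ⟨h1, h2, h3⟩
    refine ⟨Lp, Lm, hp, hm, ?_⟩
    rw [hεC h1 h2, hεD' h3] at hj
    linarith
end

section
/- Let P and P' be convex polytopes in ℝ³ with non-empty interior such that (P, −P) and (P', −P') are synisothetic. Then DP = DP', where DP = P + (−P) is the difference body. -/
open MeasureTheory Pointwise

/-- The exposed face of `P` in direction `w`: `P_w = {x ∈ P : x·w = h_P(w)}`. -/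
def exposedFace (P : Set (EuclideanSpace ℝ (Fin 3)))
    (w : EuclideanSpace ℝ (Fin 3)) : Set (EuclideanSpace ℝ (Fin 3)) :=
  {x ∈ P | ∀ y ∈ P, @inner ℝ _ _ w y ≤ @inner ℝ _ _ w x}

/-- The support cone of `P` at a face `F`:
`cone(P,F) = {μ(y − x) : y ∈ P, μ ≥ 0}` for `x ∈ relint F`. -/
def supportCone (P F : Set (EuclideanSpace ℝ (Fin 3))) :
    Set (EuclideanSpace ℝ (Fin 3)) :=
  {v | ∃ x ∈ intrinsicInterior ℝ F, ∃ y ∈ P, ∃ μ : ℝ, 0 ≤ μ ∧ v = μ • (y - x)}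

/-- `F` is a proper face of the polytope `P`: an exposed face in some unit direction. -/
def IsProperFace (P F : Set (EuclideanSpace ℝ (Fin 3))) : Prop :=
  ∃ w : EuclideanSpace ℝ (Fin 3), ‖w‖ = 1 ∧ F = exposedFace P w

/-- The face `F` of `P` and the face `G` of `Q` are isothetic:
`G` is a translate of `F` and `cone(P,F) = cone(Q,G)`. -/
def Isothetic (P F Q G : Set (EuclideanSpace ℝ (Fin 3))) : Prop :=
  (∃ t : EuclideanSpace ℝ (Fin 3), G = (t + ·) '' F) ∧ supportCone P F = supportCone Q G

/-- The pairs `(P₁, P₂)` and `(Q₁, Q₂)` are synisothetic: every proper face of `P₁` or of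
`P₂` is isothetic to some proper face of `Q₁` or of `Q₂`, and conversely. -/
def Synisothetic (P₁ P₂ Q₁ Q₂ : Set (EuclideanSpace ℝ (Fin 3))) : Prop :=
  (∀ F, IsProperFace P₁ F →
    ∃ G, (IsProperFace Q₁ G ∧ Isothetic P₁ F Q₁ G) ∨ (IsProperFace Q₂ G ∧ Isothetic P₁ F Q₂ G)) ∧
  (∀ F, IsProperFace P₂ F →
    ∃ G, (IsProperFace Q₁ G ∧ Isothetic P₂ F Q₁ G) ∨ (IsProperFace Q₂ G ∧ Isothetic P₂ F Q₂ G)) ∧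
  (∀ G, IsProperFace Q₁ G →
    ∃ F, (IsProperFace P₁ F ∧ Isothetic Q₁ G P₁ F) ∨ (IsProperFace P₂ F ∧ Isothetic Q₁ G P₂ F)) ∧
  (∀ G, IsProperFace Q₂ G →
    ∃ F, (IsProperFace P₁ F ∧ Isothetic Q₂ G P₁ F) ∨ (IsProperFace P₂ F ∧ Isothetic Q₂ G P₂ F))

/-- A (compact) convex polytope: the convex hull of a finite set. -/
def IsPolytope (P : Set (EuclideanSpace ℝ (Fin 3))) : Prop :=
  ∃ S : Finset (EuclideanSpace ℝ (Fin 3)),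
    P = convexHull ℝ (S : Set (EuclideanSpace ℝ (Fin 3)))

open Topology Filter


/-- support function -/
noncomputable def supp (A : Set (EuclideanSpace ℝ (Fin 3))) (v : (EuclideanSpace ℝ (Fin 3))) : ℝ :=
  sSup ((fun x => @inner ℝ _ _ v x) '' A)

lemma supp_eq_of_max {A : Set (EuclideanSpace ℝ (Fin 3))} {v x : (EuclideanSpace ℝ (Fin 3))} (hx : x ∈ A)
    (hm : ∀ y ∈ A, @inner ℝ _ _ v y ≤ @inner ℝ _ _ v x) :
    supp A v = @inner ℝ _ _ v x := by
  apply IsGreatest.csSup_eq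
  refine ⟨⟨x, hx, rfl⟩, ?_⟩
  rintro _ ⟨y, hy, rfl⟩
  exact hm y hy

lemma exists_max {A : Set (EuclideanSpace ℝ (Fin 3))} (hA : IsCompact A) (hne : A.Nonempty) (v : (EuclideanSpace ℝ (Fin 3))) :
    ∃ x ∈ A, ∀ y ∈ A, @inner ℝ _ _ v y ≤ @inner ℝ _ _ v x := by
  obtain ⟨x, hx, h⟩ := hA.exists_isMaxOn hne
    (f := fun y => @inner ℝ _ _ v y) (by fun_prop)
  exact ⟨x, hx, fun y hy => h hy⟩

lemma exposedFace_nonempty {A : Set (EuclideanSpace ℝ (Fin 3))} (hA : IsCompact A) (hne : A.Nonempty) (v : (EuclideanSpace ℝ (Fin 3))) :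
    (exposedFace A v).Nonempty := by
  obtain ⟨x, hx, h⟩ := exists_max hA hne v
  exact ⟨x, hx, h⟩

lemma exposedFace_compact {A : Set (EuclideanSpace ℝ (Fin 3))} (hA : IsCompact A) (v : (EuclideanSpace ℝ (Fin 3))) :
    IsCompact (exposedFace A v) := by
  have : exposedFace A v = A ∩ ⋂ y ∈ A, {x | @inner ℝ _ _ v y ≤ @inner ℝ _ _ v x} := by
    ext x; simp [exposedFace]
  rw [this]
  apply hA.inter_right
  refine isClosed_biInter fun y _ => isClosed_le continuous_const (by fun_prop)

lemma exposedFace_convex {A : Set (EuclideanSpace ℝ (Fin 3))} (hA : Convex ℝ A) (v : (EuclideanSpace ℝ (Fin 3))) :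
    Convex ℝ (exposedFace A v) := by
  have : exposedFace A v = A ∩ ⋂ y ∈ A, {x | @inner ℝ _ _ v y ≤ @inner ℝ _ _ v x} := by
    ext x; simp [exposedFace]
  rw [this]
  apply hA.inter
  refine convex_iInter₂ fun y _ => convex_halfSpace_ge (innerₛₗ ℝ v).isLinear _

lemma supp_translate {A : Set (EuclideanSpace ℝ (Fin 3))} (hA : IsCompact A) (hne : A.Nonempty) (t v : (EuclideanSpace ℝ (Fin 3))) :
    supp ((t + ·) '' A) v = @inner ℝ _ _ v t + supp A v := by
  obtain ⟨x, hx, h⟩ := exists_max hA hne v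
  rw [supp_eq_of_max hx h, supp_eq_of_max (x := t + x) (Set.mem_image_of_mem _ hx), inner_add_right]
  rintro _ ⟨y, hy, rfl⟩
  simp only [inner_add_right]
  linarith [h y hy]

lemma supp_neg {A : Set (EuclideanSpace ℝ (Fin 3))} (hA : IsCompact A) (hne : A.Nonempty) (v : (EuclideanSpace ℝ (Fin 3))) :
    supp (-A) v = supp A (-v) := by
  obtain ⟨x, hx, h⟩ := exists_max hA hne (-v)
  rw [supp_eq_of_max hx h, supp_eq_of_max (x := -x) (by simpa using hx)]
  · simp
  · intro y hy
    have := h (-y) hy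
    simpa using this

lemma supp_smul {A : Set (EuclideanSpace ℝ (Fin 3))} (hA : IsCompact A) (hne : A.Nonempty) (c : ℝ) (hc : 0 ≤ c)
    (v : (EuclideanSpace ℝ (Fin 3))) : supp A (c • v) = c * supp A v := by
  obtain ⟨x, hx, h⟩ := exists_max hA hne v
  rw [supp_eq_of_max hx h, supp_eq_of_max hx]
  · simp [inner_smul_left]
  · intro y hy
    simp only [inner_smul_left, conj_trivial]
    exact mul_le_mul_of_nonneg_left (h y hy) hc

lemma exposedFace_smul {A : Set (EuclideanSpace ℝ (Fin 3))} (c : ℝ) (hc : 0 < c) (v : (EuclideanSpace ℝ (Fin 3))) :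
    exposedFace A (c • v) = exposedFace A v := by
  ext x
  simp [exposedFace, inner_smul_left, hc]

lemma IsPolytope.compact {P : Set (EuclideanSpace ℝ (Fin 3))} (hP : IsPolytope P) : IsCompact P := by
  obtain ⟨S, rfl⟩ := hP
  exact S.finite_toSet.isCompact_convexHull (𝕜 := ℝ)

lemma IsPolytope.convex {P : Set (EuclideanSpace ℝ (Fin 3))} (hP : IsPolytope P) : Convex ℝ P := by
  obtain ⟨S, rfl⟩ := hP
  exact convex_convexHull ℝ _

lemma IsPolytope.neg {P : Set (EuclideanSpace ℝ (Fin 3))} (hP : IsPolytope P) : IsPolytope (-P) := by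
  classical
  obtain ⟨S, rfl⟩ := hP
  refine ⟨S.image (fun x => -x), ?_⟩
  rw [← convexHull_neg]
  simp

lemma supp_expand {P : Set (EuclideanSpace ℝ (Fin 3))} (hP : IsPolytope P) (hne : P.Nonempty) (w v : (EuclideanSpace ℝ (Fin 3))) :
    ∀ᶠ t : ℝ in 𝓝 0, 0 ≤ t →
      supp P (w + t • v) = supp P w + t * supp (exposedFace P w) v := by
  obtain ⟨x, hx, hmax⟩ := exists_max (exposedFace_compact hP.compact w)
    (exposedFace_nonempty hP.compact hne w) v
  rw [supp_eq_of_max hx hmax, supp_eq_of_max hx.1 hx.2]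
  obtain ⟨S, hS⟩ := hP
  have key : ∀ s ∈ S, ∀ᶠ t : ℝ in 𝓝 0, 0 ≤ t →
      @inner ℝ _ _ (w + t • v) s ≤ @inner ℝ _ _ (w + t • v) x := by
    intro s hs
    have hsP : s ∈ P := hS ▸ subset_convexHull ℝ _ hs
    rcases (hx.2 s hsP).lt_or_eq with h | h
    · have c1 : Continuous fun t : ℝ => @inner ℝ _ _ (w + t • v) s := by fun_prop
      have c2 : Continuous fun t : ℝ => @inner ℝ _ _ (w + t • v) x := by fun_prop
      have := c1.continuousAt.eventually_lt (x₀ := (0 : ℝ)) c2.continuousAt (by simpa using h)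
      filter_upwards [this] with t ht _ using ht.le
    · refine Eventually.of_forall fun t ht => ?_
      have hsF : s ∈ exposedFace P w := ⟨hsP, fun y hy => h ▸ hx.2 y hy⟩
      simp only [inner_add_left, inner_smul_left, conj_trivial]
      have := mul_le_mul_of_nonneg_left (hmax s hsF) ht
      linarith
  have key2 := (Finset.eventually_all S).2 key
  filter_upwards [key2] with t ht h0
  rw [supp_eq_of_max hx.1]
  · simp [inner_add_left, inner_smul_left]
  · intro y hy
    have : P ⊆ {y | @inner ℝ _ _ (w + t • v) y ≤ @inner ℝ _ _ (w + t • v) x} := by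
      rw [hS]
      apply convexHull_min
      · intro s hs
        exact ht s hs h0
      · exact convex_halfSpace_le (innerₛₗ ℝ (w + t • v)).isLinear _
    exact this hy

lemma face_eq {P Q : Set (EuclideanSpace ℝ (Fin 3))} (hP : IsPolytope P) (hQ : IsPolytope Q)
    (hPne : P.Nonempty) (hQne : Q.Nonempty) {w : (EuclideanSpace ℝ (Fin 3))} {G : Set (EuclideanSpace ℝ (Fin 3))}
    (hG : IsProperFace Q G) (hI : Isothetic P (exposedFace P w) Q G) :
    ∃ t : (EuclideanSpace ℝ (Fin 3)), exposedFace Q w = (t + ·) '' (exposedFace P w) := by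
  obtain ⟨u, hu, rfl⟩ := hG
  obtain ⟨⟨t, ht⟩, hcone⟩ := hI
  refine ⟨t, ?_⟩
  rw [← ht]
  obtain ⟨x, hx⟩ := (exposedFace_nonempty hQ.compact hQne u).intrinsicInterior
    (exposedFace_convex hQ.convex u)
  have hxG := intrinsicInterior_subset hx
  have hmem : ∀ y ∈ Q, y - x ∈ supportCone P (exposedFace P w) := by
    intro y hy
    rw [hcone]
    exact ⟨x, hx, y, hy, 1, zero_le_one, by simp⟩
  have hxw : ∀ y ∈ Q, @inner ℝ _ _ w y ≤ @inner ℝ _ _ w x := by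
    intro y hy
    obtain ⟨x', hx', p, hp, μ, hμ, he⟩ := hmem y hy
    have h1 := (intrinsicInterior_subset hx').2 p hp
    have h2 : @inner ℝ _ _ w (y - x) = μ * (@inner ℝ _ _ w p - @inner ℝ _ _ w x') := by
      rw [he, inner_smul_right, inner_sub_right]
    rw [inner_sub_right] at h2
    nlinarith
  apply Set.Subset.antisymm
  · intro y hy
    obtain ⟨x', hx', p, hp, μ, hμ, he⟩ := hmem y hy.1
    have hx'F := intrinsicInterior_subset hx'
    have h1 := hx'F.2 p hp
    have h2 : @inner ℝ _ _ w (y - x) = μ * (@inner ℝ _ _ w p - @inner ℝ _ _ w x') := by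
      rw [he, inner_smul_right, inner_sub_right]
    rw [inner_sub_right, le_antisymm (hxw y hy.1) (hy.2 x hxG.1), sub_self] at h2
    rcases mul_eq_zero.1 h2.symm with h | h
    · rw [h, zero_smul, sub_eq_zero] at he
      rw [he]; exact hxG
    · have hpF : p ∈ exposedFace P w :=
        ⟨hp, fun z hz => (hx'F.2 z hz).trans (by linarith)⟩
      have a1 : t + p ∈ exposedFace Q u := ht ▸ ⟨p, hpF, rfl⟩
      have a2 : t + x' ∈ exposedFace Q u := ht ▸ ⟨x', hx'F, rfl⟩
      have a3 := a1.2 _ a2.1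
      have a4 := a2.2 _ a1.1
      simp only [inner_add_right] at a3 a4
      have a5 : @inner ℝ _ _ u p = @inner ℝ _ _ u x' := by linarith
      have h3 : @inner ℝ _ _ u (y - x) = μ * (@inner ℝ _ _ u p - @inner ℝ _ _ u x') := by
        rw [he, inner_smul_right, inner_sub_right]
      rw [inner_sub_right, a5, sub_self, mul_zero, sub_eq_zero] at h3
      exact ⟨hy.1, fun z hz => h3 ▸ hxG.2 z hz⟩
  · intro g hg
    refine ⟨hg.1, fun z hz => (hxw z hz).trans ?_⟩
    rw [ht] at hg hxG
    obtain ⟨p, hp, rfl⟩ := hg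
    obtain ⟨q, hq, rfl⟩ := hxG
    simp only [inner_add_right]
    linarith [hp.2 q hq.1]

/-- translates -/
def Tr (A B : Set (EuclideanSpace ℝ (Fin 3))) : Prop := ∃ t : (EuclideanSpace ℝ (Fin 3)), B = (t + ·) '' A

lemma Tr.symm {A B : Set (EuclideanSpace ℝ (Fin 3))} (h : Tr A B) : Tr B A := by
  obtain ⟨t, rfl⟩ := h
  refine ⟨-t, ?_⟩
  rw [Set.image_image]
  simp

lemma Tr.trans {A B C : Set (EuclideanSpace ℝ (Fin 3))} (h : Tr A B) (h' : Tr B C) : Tr A C := by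
  obtain ⟨t, rfl⟩ := h
  obtain ⟨s, rfl⟩ := h'
  refine ⟨s + t, ?_⟩
  rw [Set.image_image]
  simp [add_assoc]

lemma pairing {A B C D : Set (EuclideanSpace ℝ (Fin 3))} (h1 : Tr A C ∨ Tr A D) (h2 : Tr B C ∨ Tr B D)
    (h3 : Tr C A ∨ Tr C B) (h4 : Tr D A ∨ Tr D B) :
    (Tr A C ∧ Tr B D) ∨ (Tr A D ∧ Tr B C) := by
  have s : ∀ {X Y : Set (EuclideanSpace ℝ (Fin 3))}, Tr X Y → Tr Y X := fun h => h.symm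
  have tr : ∀ {X Y Z : Set (EuclideanSpace ℝ (Fin 3))}, Tr X Y → Tr Y Z → Tr X Z := fun h h' => h.trans h'
  rcases h1 with h1 | h1 <;> rcases h2 with h2 | h2
  · rcases h4 with h4 | h4
    · exact Or.inr ⟨s h4, h2⟩
    · exact Or.inl ⟨h1, s h4⟩
  · exact Or.inl ⟨h1, h2⟩
  · exact Or.inr ⟨h1, h2⟩
  · rcases h3 with h3 | h3
    · exact Or.inl ⟨s h3, h2⟩
    · exact Or.inr ⟨h1, s h3⟩

lemma affine_of_local (g : ℝ → ℝ)
    (h : ∀ t, ∃ c, ∀ᶠ s in 𝓝 (0 : ℝ), g (t + s) = g t + s * c) :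
    ∃ b, ∀ t, g t = g 0 + t * b := by
  choose c hc using h
  have hd : ∀ t, HasDerivAt g (c t) t := by
    intro t
    have h1 : HasDerivAt (fun r => g t + (r - t) * c t) (c t) t := by
      simpa using (((hasDerivAt_id t).sub_const t).mul_const (c t)).const_add (g t)
    refine h1.congr_of_eventuallyEq ?_
    have : Tendsto (fun r : ℝ => r - t) (𝓝 t) (𝓝 0) := by
      have : Continuous fun r : ℝ => r - t := by fun_prop
      simpa using this.tendsto t
    filter_upwards [this.eventually (hc t)] with r hr
    simpa using hr
  have hloc : IsLocallyConstant c := by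
    rw [IsLocallyConstant.iff_eventually_eq]
    intro t
    have h1 : HasDerivAt (fun r => g t + (r - t) * c t) (c t) t := by
      simpa using (((hasDerivAt_id t).sub_const t).mul_const (c t)).const_add (g t)
    have : Tendsto (fun r : ℝ => r - t) (𝓝 t) (𝓝 0) := by
      have : Continuous fun r : ℝ => r - t := by fun_prop
      simpa using this.tendsto t
    have he := (this.eventually (hc t)).eventually_nhds
    filter_upwards [he] with r hr
    have h2 : HasDerivAt (fun r => g t + (r - t) * c t) (c t) r := by
      simpa using (((hasDerivAt_id r).sub_const t).mul_const (c t)).const_add (g t)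
    have h3 : HasDerivAt g (c t) r := by
      refine h2.congr_of_eventuallyEq ?_
      filter_upwards [hr] with q hq
      simpa using hq
    exact (hd r).unique h3
  refine ⟨c 0, fun t => ?_⟩
  have hconst : ∀ r, c r = c 0 := fun r => hloc.apply_eq_of_preconnectedSpace r 0
  have h0 : ∀ r, HasDerivAt (fun r => g r - r * c 0) 0 r := by
    intro r
    have h5 : HasDerivAt (fun r : ℝ => r * c 0) (c 0) r := by
      simpa using (hasDerivAt_id r).mul_const (c 0)
    have h6 := (hd r).fun_sub h5
    rwa [hconst r, sub_self] at h6
  have := is_const_of_deriv_eq_zero (fun r => (h0 r).differentiableAt) (fun r => (h0 r).deriv) t 0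
  simp at this
  linarith

lemma slope_eq {f : (EuclideanSpace ℝ (Fin 3)) → ℝ} (hom : ∀ c : ℝ, 0 ≤ c → ∀ v, f (c • v) = c * f v)
    (v w : (EuclideanSpace ℝ (Fin 3))) (a b c : ℝ) (hl : ∀ᶠ s in 𝓝 (0 : ℝ), f (v + s • w) = f v + s * c)
    (hg : ∀ t : ℝ, 0 < t → f (w + t • v) = a + t * b) : f v = b := by
  have h1 : ∀ s : ℝ, 0 < s → f (v + s • w) = s * a + b := by
    intro s hs
    have : v + s • w = s • (w + s⁻¹ • v) := by
      rw [smul_add, smul_smul, mul_inv_cancel₀ hs.ne', one_smul, add_comm]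
    rw [this, hom s hs.le, hg _ (inv_pos.2 hs), mul_add, ← mul_assoc, mul_inv_cancel₀ hs.ne',
      one_mul]
  have l1 : Tendsto (fun s : ℝ => f v + s * c) (𝓝[>] 0) (𝓝 (f v)) := by
    have : Continuous fun s : ℝ => f v + s * c := by fun_prop
    simpa using (this.tendsto 0).mono_left nhdsWithin_le_nhds
  have l2 : Tendsto (fun s : ℝ => s * a + b) (𝓝[>] 0) (𝓝 b) := by
    have : Continuous fun s : ℝ => s * a + b := by fun_prop
    simpa using (this.tendsto 0).mono_left nhdsWithin_le_nhds
  refine tendsto_nhds_unique (l1.congr' ?_) l2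
  filter_upwards [hl.filter_mono nhdsWithin_le_nhds, self_mem_nhdsWithin] with s hs hs0
  rw [← hs, h1 s hs0]

lemma exists_orth (v : (EuclideanSpace ℝ (Fin 3))) : ∃ w : (EuclideanSpace ℝ (Fin 3)), w ≠ 0 ∧ @inner ℝ _ _ w v = 0 := by
  by_cases h : v 0 = 0 ∧ v 1 = 0
  · refine ⟨!₂[1, 0, 0], fun hh => ?_, ?_⟩
    · have := congrArg (fun z : (EuclideanSpace ℝ (Fin 3)) => z 0) hh
      simp at this
    · simp [PiLp.inner_apply, Fin.sum_univ_three, h.1]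
  · refine ⟨!₂[v 1, - v 0, 0], fun hh => ?_, ?_⟩
    · have h0 := congrArg (fun z : (EuclideanSpace ℝ (Fin 3)) => z 0) hh
      have h1 := congrArg (fun z : (EuclideanSpace ℝ (Fin 3)) => z 1) hh
      simp at h0 h1
      exact h ⟨h1, h0⟩
    · simp [PiLp.inner_apply, Fin.sum_univ_three]
      ring

lemma zero_of_local {f : (EuclideanSpace ℝ (Fin 3)) → ℝ} (hom : ∀ c : ℝ, 0 ≤ c → ∀ v, f (c • v) = c * f v)
    (heven : ∀ v, f (-v) = f v)
    (hl : ∀ w, w ≠ 0 → ∀ v, ∃ c, ∀ᶠ s in 𝓝 (0 : ℝ), f (w + s • v) = f w + s * c) (v : (EuclideanSpace ℝ (Fin 3))) :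
    f v = 0 := by
  by_cases hv : v = 0
  · have := hom 0 le_rfl v
    simpa [hv] using this
  obtain ⟨w, hw, ho⟩ := exists_orth v
  have hne : ∀ t : ℝ, w + t • v ≠ 0 := by
    intro t h
    have h2 : @inner ℝ _ _ w (w + t • v) = 0 := by rw [h, inner_zero_right]
    rw [inner_add_right, inner_smul_right, ho, mul_zero, add_zero, inner_self_eq_zero] at h2
    exact hw h2
  obtain ⟨b, hb⟩ := affine_of_local (fun t => f (w + t • v)) (by
    intro t
    obtain ⟨c, hc⟩ := hl _ (hne t) v
    refine ⟨c, ?_⟩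
    filter_upwards [hc] with s hs
    rw [add_smul, ← add_assoc, hs])
  obtain ⟨c1, hc1⟩ := hl v hv w
  obtain ⟨c2, hc2⟩ := hl (-v) (neg_ne_zero.2 hv) w
  have e1 := slope_eq hom v w _ b c1 hc1 (fun t _ => hb t)
  have e2 := slope_eq hom (-v) w (f (w + (0 : ℝ) • v)) (-b) c2 hc2 (fun t _ => by
    have := hb (-t)
    simp only [neg_smul] at this
    rw [smul_neg, this]; ring)
  rw [heven] at e2
  linarith

lemma subset_of_supp {K L : Set (EuclideanSpace ℝ (Fin 3))} (hK : IsCompact K) (hL : IsCompact L) (hLc : Convex ℝ L)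
    (hKne : K.Nonempty) (hLne : L.Nonempty) (h : ∀ v, supp K v ≤ supp L v) : K ⊆ L := by
  intro x hx
  by_contra hxL
  obtain ⟨φ, u, h1, h2⟩ := geometric_hahn_banach_closed_point hLc hL.isClosed hxL
  set v := (InnerProductSpace.toDual ℝ (EuclideanSpace ℝ (Fin 3))).symm φ with hv
  have hφ : ∀ y, @inner ℝ _ _ v y = φ y := fun y => by
    rw [hv, InnerProductSpace.toDual_symm_apply]
  obtain ⟨k, hk, hk'⟩ := exists_max hK hKne v
  obtain ⟨l, hl, hl'⟩ := exists_max hL hLne v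
  have := h v
  rw [supp_eq_of_max hk hk', supp_eq_of_max hl hl'] at this
  have a := hk' x hx
  simp only [hφ] at this a
  linarith [h1 l hl]

lemma supp_add {A B : Set (EuclideanSpace ℝ (Fin 3))} (hA : IsCompact A) (hB : IsCompact B) (hAne : A.Nonempty)
    (hBne : B.Nonempty) (v : (EuclideanSpace ℝ (Fin 3))) : supp (A + B) v = supp A v + supp B v := by
  obtain ⟨k, hk, hk'⟩ := exists_max hA hAne v
  obtain ⟨l, hl, hl'⟩ := exists_max hB hBne v
  rw [supp_eq_of_max hk hk', supp_eq_of_max hl hl', supp_eq_of_max (Set.add_mem_add hk hl),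
    inner_add_right]
  rintro _ ⟨a, ha, b, hb, rfl⟩
  simp only [inner_add_right]
  linarith [hk' a ha, hl' b hb]

lemma local_affine {P Q P' Q' : Set (EuclideanSpace ℝ (Fin 3))} (hP : IsPolytope P) (hQ : IsPolytope Q)
    (hP' : IsPolytope P') (hQ' : IsPolytope Q') (nP : P.Nonempty) (nQ : Q.Nonempty)
    (nP' : P'.Nonempty) (nQ' : Q'.Nonempty) (w : (EuclideanSpace ℝ (Fin 3)))
    (h1 : Tr (exposedFace P w) (exposedFace P' w)) (h2 : Tr (exposedFace Q w) (exposedFace Q' w))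
    (v : (EuclideanSpace ℝ (Fin 3))) : ∃ c, ∀ᶠ s in 𝓝 (0 : ℝ),
      supp P (w + s • v) + supp Q (w + s • v) - supp P' (w + s • v) - supp Q' (w + s • v) =
      supp P w + supp Q w - supp P' w - supp Q' w + s * c := by
  obtain ⟨a, ha⟩ := h1
  obtain ⟨b, hb⟩ := h2
  have half : ∀ v : (EuclideanSpace ℝ (Fin 3)), ∀ᶠ s in 𝓝 (0 : ℝ), 0 ≤ s →
      supp P (w + s • v) + supp Q (w + s • v) - supp P' (w + s • v) - supp Q' (w + s • v) =
      supp P w + supp Q w - supp P' w - supp Q' w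
        + s * (- @inner ℝ _ _ v a - @inner ℝ _ _ v b) := by
    intro v
    have ea := supp_translate (exposedFace_compact hP.compact w)
      (exposedFace_nonempty hP.compact nP w) a v
    have eb := supp_translate (exposedFace_compact hQ.compact w)
      (exposedFace_nonempty hQ.compact nQ w) b v
    rw [← ha] at ea
    rw [← hb] at eb
    filter_upwards [supp_expand hP nP w v, supp_expand hQ nQ w v, supp_expand hP' nP' w v,
      supp_expand hQ' nQ' w v] with s i1 i2 i3 i4 hs
    rw [i1 hs, i2 hs, i3 hs, i4 hs, ea, eb]
    ring
  refine ⟨- @inner ℝ _ _ v a - @inner ℝ _ _ v b, ?_⟩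
  have hneg : Tendsto (fun s : ℝ => -s) (𝓝 0) (𝓝 0) := by
    simpa using (continuous_neg (G := ℝ)).tendsto 0
  filter_upwards [half v, hneg.eventually (half (-v))] with s i1 i2
  rcases le_total 0 s with hs | hs
  · exact i1 hs
  · have := i2 (by linarith)
    simp only [smul_neg, neg_smul, neg_neg, inner_neg_left] at this
    rw [this]; ring

/-- If `(P, −P)` and `(P', −P')` are synisothetic pairs of convex polytopes in `ℝ³` with
non-empty interior, then the difference bodies `DP = P + (−P)` and `DP' = P' + (−P')`
coincide. -/
theorem synisothetic_implies_equal_difference_bodies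
    (P P' : Set (EuclideanSpace ℝ (Fin 3)))
    (hP : IsPolytope P) (hP' : IsPolytope P')
    (hPint : (interior P).Nonempty) (hP'int : (interior P').Nonempty)
    (hsyn : Synisothetic P (-P) P' (-P')) :
    P + (-P) = P' + (-P') := by
  have nP : P.Nonempty := hPint.mono interior_subset
  have nP' : P'.Nonempty := hP'int.mono interior_subset
  have nQ : (-P).Nonempty := nP.neg
  have nQ' : (-P').Nonempty := nP'.neg
  have hQ := hP.neg
  have hQ' := hP'.neg
  obtain ⟨s1, s2, s3, s4⟩ := hsyn
  have step : ∀ {A B C : Set (EuclideanSpace ℝ (Fin 3))}, IsPolytope A → IsPolytope B → IsPolytope C → A.Nonempty →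
      B.Nonempty → C.Nonempty →
      (∀ F, IsProperFace A F → ∃ G, (IsProperFace B G ∧ Isothetic A F B G) ∨
        (IsProperFace C G ∧ Isothetic A F C G)) → ∀ w : (EuclideanSpace ℝ (Fin 3)), ‖w‖ = 1 →
      Tr (exposedFace A w) (exposedFace B w) ∨ Tr (exposedFace A w) (exposedFace C w) := by
    intro A B C hA hB hC nA nB nC h w hw
    obtain ⟨G, ⟨hG, hI⟩ | ⟨hG, hI⟩⟩ := h _ ⟨w, hw, rfl⟩
    · exact Or.inl (face_eq hA hB nA nB hG hI)
    · exact Or.inr (face_eq hA hC nA nC hG hI)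
  have pair : ∀ w : (EuclideanSpace ℝ (Fin 3)), w ≠ 0 →
      (Tr (exposedFace P w) (exposedFace P' w) ∧ Tr (exposedFace (-P) w) (exposedFace (-P') w)) ∨
      (Tr (exposedFace P w) (exposedFace (-P') w) ∧ Tr (exposedFace (-P) w) (exposedFace P' w)) := by
    intro w hw
    have hpos : 0 < ‖w‖⁻¹ := inv_pos.2 (norm_pos_iff.2 hw)
    have hu : ‖‖w‖⁻¹ • w‖ = 1 := by
      rw [norm_smul, norm_inv, norm_norm, inv_mul_cancel₀ (norm_ne_zero_iff.2 hw)]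
    have := pairing (step hP hP' hQ' nP nP' nQ' s1 _ hu) (step hQ hP' hQ' nQ nP' nQ' s2 _ hu)
      (step hP' hP hQ nP' nP nQ s3 _ hu) (step hQ' hP hQ nQ' nP nQ s4 _ hu)
    simpa only [exposedFace_smul _ hpos] using this
  have hzero := zero_of_local
    (f := fun w => supp P w + supp (-P) w - supp P' w - supp (-P') w)
    (by
      intro c hc v
      simp only [supp_smul hP.compact nP c hc, supp_smul hP'.compact nP' c hc,
        supp_smul hQ.compact nQ c hc, supp_smul hQ'.compact nQ' c hc]
      ring)
    (by
      intro v
      simp only [supp_neg hP.compact nP, supp_neg hP'.compact nP', neg_neg]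
      ring)
    (by
      intro w hw v
      rcases pair w hw with ⟨h1, h2⟩ | ⟨h1, h2⟩
      · exact local_affine hP hQ hP' hQ' nP nQ nP' nQ' w h1 h2 v
      · obtain ⟨c, hc⟩ := local_affine hP hQ hQ' hP' nP nQ nQ' nP' w h1 h2 v
        refine ⟨c, ?_⟩
        filter_upwards [hc] with s hs
        linarith)
  have heq : ∀ v, supp (P + -P) v = supp (P' + -P') v := by
    intro v
    rw [supp_add hP.compact hQ.compact nP nQ, supp_add hP'.compact hQ'.compact nP' nQ']
    have := hzero v
    linarith
  have c1 := hP.compact.add hQ.compact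
  have c2 := hP'.compact.add hQ'.compact
  exact Set.Subset.antisymm
    (subset_of_supp c1 c2 (hP'.convex.add hQ'.convex) (nP.add nQ) (nP'.add nQ')
      fun v => (heq v).le)
    (subset_of_supp c2 c1 (hP.convex.add hQ.convex) (nP'.add nQ') (nP.add nQ)
      fun v => (heq v).ge)
end

section
/- Let P and P' be convex polytopes in ℝ³ with non-empty interior such that (P, −P) and (P', −P') are synisothetic. Then for each w ∈ S² there exist σ ∈ {−1, 1} and x ∈ ℝ³ (possibly depending on σ) such that P_w = (σP')_w + x, cone(P, P_w) = cone(σP', (σP')_w), P_{−w} = (σP')_{−w} + x, and cone(P, P_{−w}) = cone(σP', (σP')_{−w}). -/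
open MeasureTheory Pointwise

namespace Synis

/-- Abbreviation for Euclidean three-space. -/
abbrev E3 := EuclideanSpace ℝ (Fin 3)

lemma exposedFace_neg (A : Set E3) (w : E3) : exposedFace (-A) w = -exposedFace A (-w) := by
  ext x
  simp only [exposedFace, Set.mem_neg, Set.mem_setOf_eq]
  refine and_congr Iff.rfl ⟨fun h y hy => ?_, fun h y hy => ?_⟩
  · have := h (-y) (by simpa using hy)
    simpa using this
  · have := h (-y) hy
    simpa using this

lemma intrinsicInterior_neg (F : Set E3) : intrinsicInterior ℝ (-F) = -intrinsicInterior ℝ F := by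
  have := (LinearIsometryEquiv.neg ℝ (E := E3)).toLinearIsometry.toAffineIsometry.intrinsicInterior_image F
  have e : ((LinearIsometryEquiv.neg ℝ (E := E3)).toLinearIsometry.toAffineIsometry : E3 → E3) = Neg.neg := by
    ext x; simp
  rw [e] at this
  simpa [Set.image_neg_eq_neg] using this

lemma supportCone_neg (A F : Set E3) : supportCone (-A) (-F) = -supportCone A F := by
  ext v
  simp only [supportCone, intrinsicInterior_neg, Set.mem_neg, Set.mem_setOf_eq]
  constructor
  · rintro ⟨x, hx, y, hy, μ, hμ, rfl⟩
    exact ⟨-x, hx, -y, hy, μ, hμ, by module⟩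
  · rintro ⟨x, hx, y, hy, μ, hμ, h⟩
    exact ⟨-x, by simpa using hx, -y, by simpa using hy, μ, hμ, by rw [← neg_neg v, h]; module⟩

lemma exposedFace_add (A B : Set E3) (w : E3) :
    exposedFace (A + B) w = exposedFace A w + exposedFace B w := by
  ext x
  constructor
  · rintro ⟨hx, h⟩
    obtain ⟨a, ha, b, hb, rfl⟩ := Set.mem_add.1 hx
    refine Set.add_mem_add ⟨ha, fun y hy => ?_⟩ ⟨hb, fun y hy => ?_⟩
    · have := h _ (Set.add_mem_add hy hb)
      simp only [inner_add_right] at this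
      linarith
    · have := h _ (Set.add_mem_add ha hy)
      simp only [inner_add_right] at this
      linarith
  · intro hx
    obtain ⟨a, ha, b, hb, rfl⟩ := Set.mem_add.1 hx
    refine ⟨Set.add_mem_add ha.1 hb.1, fun y hy => ?_⟩
    obtain ⟨c, hc, d, hd, rfl⟩ := Set.mem_add.1 hy
    have h1 := ha.2 c hc
    have h2 := hb.2 d hd
    simp only [inner_add_right]
    linarith

lemma exposedFace_singleton (t w : E3) : exposedFace {t} w = {t} := by
  ext x; simp +contextual [exposedFace]

lemma exposedFace_of_subset {A : Set E3} {w w' : E3}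
    (h : exposedFace A w' ⊆ exposedFace A w) (hne : (exposedFace A w').Nonempty) :
    exposedFace A w' = exposedFace (exposedFace A w) w' := by
  ext x
  constructor
  · intro hx
    exact ⟨h hx, fun y hy => hx.2 y hy.1⟩
  · intro hx
    obtain ⟨z, hz⟩ := hne
    exact ⟨hx.1.1, fun y hy => (hz.2 y hy).trans (hx.2 z (h hz))⟩

lemma exposedFace_nonempty {A : Set E3} (hA : IsCompact A) (hne : A.Nonempty) (w : E3) :
    (exposedFace A w).Nonempty := by
  obtain ⟨x, hx, h⟩ := hA.exists_isMaxOn hne (f := fun y => inner ℝ w y) (by fun_prop)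
  exact ⟨x, hx, fun y hy => h hy⟩

lemma exposedFace_closed {A : Set E3} (hA : IsClosed A) (w : E3) :
    IsClosed (exposedFace A w) := by
  have : exposedFace A w = A ∩ ⋂ y ∈ A, {x | inner ℝ w y ≤ inner ℝ w x} := by
    ext x; simp [exposedFace]
  rw [this]
  refine hA.inter (isClosed_biInter fun y _ => ?_)
  exact isClosed_le (by fun_prop) (by fun_prop)

lemma exposedFace_compact {A : Set E3} (hA : IsCompact A) (w : E3) :
    IsCompact (exposedFace A w) :=
  hA.of_isClosed_subset (exposedFace_closed hA.isClosed w) (fun _ h => h.1)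

lemma exposedFace_isExposed (A : Set E3) (w : E3) : IsExposed ℝ A (exposedFace A w) := by
  intro _
  exact ⟨innerSL ℝ w, by ext x; simp [exposedFace]⟩

lemma exposedFace_convex {A : Set E3} (hA : Convex ℝ A) (w : E3) :
    Convex ℝ (exposedFace A w) := (exposedFace_isExposed A w).convex hA

lemma polytope_compact {P : Set E3} (h : IsPolytope P) : IsCompact P := by
  obtain ⟨S, rfl⟩ := h
  exact S.finite_toSet.isCompact_convexHull ℝ

lemma polytope_convex {P : Set E3} (h : IsPolytope P) : Convex ℝ P := by
  obtain ⟨S, rfl⟩ := h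
  exact convex_convexHull _ _

lemma polytope_neg {P : Set E3} (h : IsPolytope P) : IsPolytope (-P) := by
  classical
  obtain ⟨S, rfl⟩ := h
  exact ⟨-S, by rw [Finset.coe_neg, convexHull_neg]⟩

lemma eventually_subset {P : Set E3} (h : IsPolytope P) (w : E3) :
    ∀ᶠ w' in nhds w, exposedFace P w' ⊆ exposedFace P w := by
  have hc := polytope_compact h
  have hv := polytope_convex h
  obtain ⟨S, rfl⟩ := h
  set Q := convexHull ℝ (S : Set E3) with hQ
  have key : ∀ x ∈ S, ∀ᶠ w' in nhds w, x ∈ exposedFace Q w' → x ∈ exposedFace Q w := by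
    intro x hx
    by_cases hxw : x ∈ exposedFace Q w
    · exact Filter.Eventually.of_forall fun _ _ => hxw
    · have hxQ : x ∈ Q := subset_convexHull ℝ _ hx
      have : ∃ y ∈ Q, inner ℝ w x < inner ℝ w y := by
        by_contra! hcon
        exact hxw ⟨hxQ, hcon⟩
      obtain ⟨y, hy, hlt⟩ := this
      have ho : IsOpen {w' : E3 | inner ℝ w' x < inner ℝ w' y} :=
        isOpen_lt (by fun_prop) (by fun_prop)
      filter_upwards [ho.mem_nhds hlt] with w' hw' hx'
      exact absurd (hx'.2 y hy) (not_le.2 hw')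
  have key2 := (Filter.eventually_all_finset S).2 key
  filter_upwards [key2] with w' hw'
  have hc' := exposedFace_compact hc w'
  have hv' := exposedFace_convex hv w'
  rw [← closure_convexHull_extremePoints hc' hv']
  refine closure_minimal (convexHull_min ?_ (exposedFace_convex hv w))
    (exposedFace_closed hc.isClosed w)
  intro x hx
  have hxQ : x ∈ Set.extremePoints ℝ Q :=
    (exposedFace_isExposed Q w').isExtreme.extremePoints_subset_extremePoints hx
  exact hw' x (extremePoints_convexHull_subset hxQ) hx.1

lemma relint_extend {F : Set E3} {p q : E3} (hq : q ∈ intrinsicInterior ℝ F) (hp : p ∈ F) :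
    ∃ ε : ℝ, 0 < ε ∧ q - ε • (p - q) ∈ F := by
  obtain ⟨y, hy, rfl⟩ := hq
  have hpS : p ∈ affineSpan ℝ F := subset_affineSpan ℝ F hp
  let f : ℝ → affineSpan ℝ F := fun ε =>
    ⟨AffineMap.lineMap (y : E3) p (-ε), AffineMap.lineMap_mem _ y.2 hpS⟩
  have hf : Continuous f := by
    refine Continuous.subtype_mk ?_ _
    simp only [AffineMap.lineMap_apply]
    fun_prop
  have h0 : f 0 = y := by
    apply Subtype.ext
    simp [f]
  have hev : ∀ᶠ ε in nhds (0 : ℝ), f ε ∈ interior ((↑) ⁻¹' F : Set (affineSpan ℝ F)) :=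
    hf.continuousAt.eventually (by rw [h0]; exact isOpen_interior.mem_nhds hy)
  obtain ⟨δ, hδ, hball⟩ := Metric.eventually_nhds_iff.1 hev
  refine ⟨δ / 2, by positivity, ?_⟩
  have := interior_subset (hball (y := δ / 2)
    (by rw [Real.dist_eq, sub_zero, abs_of_pos (by positivity)]; linarith))
  have h2 : ((f (δ / 2) : affineSpan ℝ F) : E3) ∈ F := this
  convert h2 using 1
  simp only [f, AffineMap.lineMap_apply, vsub_eq_sub, vadd_eq_add]
  module

lemma dir_eq {P Q : Set E3} {w w' : E3}
    (hQ : IsCompact Q) (hQv : Convex ℝ Q) (hQn : Q.Nonempty)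
    (hc : supportCone P (exposedFace P w) = supportCone Q (exposedFace Q w')) :
    exposedFace Q w' = exposedFace Q w := by
  have hGn : (intrinsicInterior ℝ (exposedFace Q w')).Nonempty :=
    (exposedFace_nonempty hQ hQn w').intrinsicInterior (exposedFace_convex hQv w')
  obtain ⟨x, hx⟩ := hGn
  have hxG : x ∈ exposedFace Q w' := intrinsicInterior_subset hx
  have hcone : ∀ y ∈ Q, y - x ∈ supportCone P (exposedFace P w) := by
    intro y hy
    rw [hc]
    exact ⟨x, hx, y, hy, 1, zero_le_one, by simp⟩
  have hxw : x ∈ exposedFace Q w := by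
    refine ⟨hxG.1, fun y hy => ?_⟩
    obtain ⟨q, hq, p, hp, μ, hμ, e⟩ := hcone y hy
    have h1 := (intrinsicInterior_subset hq).2 p hp
    have h2 : inner ℝ w (y - x) = μ * (inner ℝ w p - inner ℝ w q) := by
      rw [e, inner_smul_right, inner_sub_right]
    rw [inner_sub_right] at h2
    nlinarith
  apply Set.Subset.antisymm
  · intro z hz
    obtain ⟨ε, hε, h⟩ := relint_extend hx hz
    have h1 := hxw.2 _ h.1
    simp only [inner_sub_right, inner_smul_right] at h1
    refine ⟨hz.1, fun y hy => (hxw.2 y hy).trans ?_⟩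
    nlinarith
  · intro y hy
    obtain ⟨q, hq, p, hp, μ, hμ, e⟩ := hcone y hy.1
    rcases hμ.eq_or_lt with h0 | hpos
    · rw [← h0, zero_smul, sub_eq_zero] at e
      rwa [e]
    · have hqF := intrinsicInterior_subset hq
      have h2 : inner ℝ w (y - x) = μ * (inner ℝ w p - inner ℝ w q) := by
        rw [e, inner_smul_right, inner_sub_right]
      rw [inner_sub_right] at h2
      have h3 := hy.2 x hxG.1
      have h4 : inner ℝ w q ≤ inner ℝ w p := by
        by_contra! hlt
        nlinarith
      have hpF : p ∈ exposedFace P w := ⟨hp, fun z hz => (hqF.2 z hz).trans h4⟩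
      obtain ⟨ε, hε, h⟩ := relint_extend hq hpF
      have hm : (q - ε • (p - q)) - q ∈ supportCone Q (exposedFace Q w') := by
        rw [← hc]
        exact ⟨q, hq, _, h.1, 1, zero_le_one, by simp⟩
      obtain ⟨x', hx', y', hy', ν, hν, e'⟩ := hm
      have h5 := (intrinsicInterior_subset hx').2 y' hy'
      have h6 : inner ℝ w' ((q - ε • (p - q)) - q) = ν * (inner ℝ w' y' - inner ℝ w' x') := by
        rw [e', inner_smul_right, inner_sub_right]
      simp only [inner_sub_right, inner_smul_right] at h6
      have h7 : inner ℝ w' (y - x) = μ * (inner ℝ w' p - inner ℝ w' q) := by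
        rw [e, inner_smul_right, inner_sub_right]
      rw [inner_sub_right] at h7
      have h8 : 0 ≤ inner ℝ w' p - inner ℝ w' q := by
        by_contra! hlt
        nlinarith
      refine ⟨hy.1, fun z hz => (hxG.2 z hz).trans ?_⟩
      nlinarith

/-- Isothetic faces in a common direction. -/
def Rel (w : E3) (A B : Set E3) : Prop :=
  (∃ t : E3, exposedFace B w = {t} + exposedFace A w) ∧
    supportCone A (exposedFace A w) = supportCone B (exposedFace B w)

lemma cancel {t : E3} {A B : Set E3} : A = {t} + B ↔ B = {-t} + A := by
  constructor
  · rintro rfl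
    rw [← add_assoc, Set.singleton_add_singleton]; simp
  · rintro rfl
    rw [← add_assoc, Set.singleton_add_singleton]; simp

lemma Rel.symm {w : E3} {A B : Set E3} (h : Rel w A B) : Rel w B A := by
  obtain ⟨⟨t, ht⟩, hc⟩ := h
  exact ⟨⟨-t, cancel.1 ht⟩, hc.symm⟩

lemma Rel.trans {w : E3} {A B C : Set E3} (h : Rel w A B) (h' : Rel w B C) : Rel w A C := by
  obtain ⟨⟨t, ht⟩, hc⟩ := h
  obtain ⟨⟨s, hs⟩, hc'⟩ := h'
  refine ⟨⟨s + t, ?_⟩, hc.trans hc'⟩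
  rw [hs, ht, ← add_assoc, Set.singleton_add_singleton]

lemma rel_of {P Q G : Set E3} {w : E3} (hQ : IsPolytope Q) (hQn : Q.Nonempty)
    (hG : IsProperFace Q G) (h : Isothetic P (exposedFace P w) Q G) : Rel w P Q := by
  obtain ⟨w', -, rfl⟩ := hG
  obtain ⟨⟨t, ht⟩, hc⟩ := h
  have e := dir_eq (polytope_compact hQ) (polytope_convex hQ) hQn hc
  rw [e] at ht hc
  exact ⟨⟨t, by rw [ht, Set.singleton_add]⟩, hc⟩

lemma rel_cases {P P' : Set E3} (hP : IsPolytope P) (hP' : IsPolytope P')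
    (hn : P.Nonempty) (hn' : P'.Nonempty) (hsyn : Synisothetic P (-P) P' (-P'))
    (w : E3) (hw : ‖w‖ = 1) :
    (Rel w P P' ∧ Rel w (-P) (-P')) ∨ (Rel w P (-P') ∧ Rel w (-P) P') := by
  have step : ∀ A B C : Set E3, IsPolytope B → IsPolytope C → B.Nonempty → C.Nonempty →
      (∀ F, IsProperFace A F → ∃ G, (IsProperFace B G ∧ Isothetic A F B G) ∨
        (IsProperFace C G ∧ Isothetic A F C G)) → Rel w A B ∨ Rel w A C := by
    intro A B C hB hC hBn hCn h
    obtain ⟨G, h | h⟩ := h _ ⟨w, hw, rfl⟩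
    · exact Or.inl (rel_of hB hBn h.1 h.2)
    · exact Or.inr (rel_of hC hCn h.1 h.2)
  obtain ⟨h1, h2, h3, h4⟩ := hsyn
  have a := step _ _ _ hP' (polytope_neg hP') hn' hn'.neg h1
  have b := step _ _ _ hP' (polytope_neg hP') hn' hn'.neg h2
  have c := step _ _ _ hP (polytope_neg hP) hn hn.neg h3
  have d := step _ _ _ hP (polytope_neg hP) hn hn.neg h4
  rcases a with a | a <;> rcases b with b | b
  · rcases d with d | d
    · exact Or.inl ⟨a, b.trans (a.symm.trans d.symm)⟩
    · exact Or.inl ⟨a, d.symm⟩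
  · exact Or.inl ⟨a, b⟩
  · exact Or.inr ⟨a, b⟩
  · rcases c with c | c
    · exact Or.inr ⟨a, b.trans (a.symm.trans c.symm)⟩
    · exact Or.inr ⟨a, c.symm⟩

lemma translate_zero {A : Set E3} (hA : IsCompact A) (hn : A.Nonempty) {t : E3}
    (h : A = {t} + A) : t = 0 := by
  obtain ⟨x, hx, hm⟩ := exposedFace_nonempty hA hn t
  have h1 : t + x ∈ A := by
    rw [h]; exact Set.add_mem_add rfl hx
  have h2 := hm _ h1
  rw [inner_add_right] at h2
  have h3 : inner ℝ t t ≤ 0 := by linarith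
  rw [real_inner_self_eq_norm_sq] at h3
  exact norm_eq_zero.1 (pow_eq_zero_iff (two_ne_zero)|>.1 (le_antisymm h3 (sq_nonneg _)))

lemma translate_unique {A B : Set E3} (hB : IsCompact B) (hn : B.Nonempty) {s t : E3}
    (h : A = {s} + B) (h' : A = {t} + B) : s = t := by
  have : B = {-s + t} + B := by
    have := cancel.1 h
    rw [h', ← add_assoc, Set.singleton_add_singleton] at this
    exact this
  have := translate_zero hB hn this
  exact (neg_add_eq_zero.1 this)

/-- The face of the difference body. -/
def D (P : Set E3) (w : E3) : Set E3 := exposedFace P w + exposedFace (-P) w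

lemma D_neg (P : Set E3) (w : E3) : D P (-w) = -D P w := by
  simp only [D, exposedFace_neg, neg_neg, neg_add]
  rw [add_comm]

lemma D_compact {P : Set E3} (hP : IsPolytope P) (w : E3) : IsCompact (D P w) :=
  (exposedFace_compact (polytope_compact hP) w).add
    (exposedFace_compact (polytope_compact (polytope_neg hP)) w)

lemma D_nonempty {P : Set E3} (hP : IsPolytope P) (hn : P.Nonempty) (w : E3) :
    (D P w).Nonempty :=
  (exposedFace_nonempty (polytope_compact hP) hn w).add
    (exposedFace_nonempty (polytope_compact (polytope_neg hP)) hn.neg w)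

lemma D_near {P : Set E3} (hP : IsPolytope P) (hn : P.Nonempty) (w : E3) :
    ∀ᶠ w' in nhds w, D P w' = exposedFace (D P w) w' := by
  filter_upwards [eventually_subset hP w, eventually_subset (polytope_neg hP) w] with w' h1 h2
  unfold D
  rw [exposedFace_add,
    ← exposedFace_of_subset h1 (exposedFace_nonempty (polytope_compact hP) hn w'),
    ← exposedFace_of_subset h2
      (exposedFace_nonempty (polytope_compact (polytope_neg hP)) hn.neg w')]

lemma D_eq {P P' : Set E3} (hP : IsPolytope P) (hP' : IsPolytope P')
    (hn : P.Nonempty) (hn' : P'.Nonempty)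
    (h : ∀ w : E3, ‖w‖ = 1 → ∃ t : E3, D P w = {t} + D P' w) (w : E3) (hw : ‖w‖ = 1) :
    D P w = D P' w := by
  have h' : ∀ w : Metric.sphere (0 : E3) 1, ∃ t : E3, D P w = {t} + D P' w :=
    fun w => h w (by simpa using w.2)
  choose t ht using h'
  have hloc : IsLocallyConstant t := by
    rw [IsLocallyConstant.iff_eventually_eq]
    intro u
    have hc : Filter.Tendsto (fun v : Metric.sphere (0 : E3) 1 => (v : E3)) (nhds u)
        (nhds (u : E3)) := continuous_subtype_val.continuousAt
    filter_upwards [hc.eventually (D_near hP hn u), hc.eventually (D_near hP' hn' u)] with v h1 h2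
    refine translate_unique (D_compact hP' v) (D_nonempty hP' hn' v) (ht v) ?_
    rw [h1, ht u, exposedFace_add, exposedFace_singleton, ← h2]
  have hpre : IsPreconnected (Metric.sphere (0 : E3) 1) := by
    apply isPreconnected_sphere
    rw [← Module.finrank_eq_rank, finrank_euclideanSpace_fin]
    norm_num
  haveI : PreconnectedSpace (Metric.sphere (0 : E3) 1) :=
    isPreconnected_iff_preconnectedSpace.1 hpre
  have hws : w ∈ Metric.sphere (0 : E3) 1 := by simpa using hw
  have hws' : -w ∈ Metric.sphere (0 : E3) 1 := by simpa using hw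
  have e := hloc.apply_eq_of_preconnectedSpace ⟨w, hws⟩ ⟨-w, hws'⟩
  have e1 := ht ⟨w, hws⟩
  have e2 := ht ⟨-w, hws'⟩
  simp only [D_neg] at e2
  rw [← e] at e2
  set s := t ⟨w, hws⟩
  have e3 : D P w = {-s} + D P' w := by
    have := congrArg (fun X : Set E3 => -X) e2
    simpa only [neg_add, neg_neg, Set.neg_singleton] using this
  have hs := translate_unique (D_compact hP' w) (D_nonempty hP' hn' w) e1 e3
  have hs0 : s = 0 := by
    have h2 : (2 : ℝ) • s = 0 := by
      rw [two_smul]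
      nth_rewrite 1 [hs]
      simp
    exact (smul_eq_zero.1 h2).resolve_left two_ne_zero
  simp only [hs0] at e1
  simpa using e1

lemma final {P Q : Set E3} (hQ : IsPolytope Q) (hn : Q.Nonempty) (w : E3)
    (hD : D P w = D Q w) (h1 : Rel w P Q) (h2 : Rel w (-P) (-Q)) :
    ∃ x : E3,
      exposedFace P w = (x + ·) '' exposedFace Q w ∧
      supportCone P (exposedFace P w) = supportCone Q (exposedFace Q w) ∧
      exposedFace P (-w) = (x + ·) '' exposedFace Q (-w) ∧
      supportCone P (exposedFace P (-w)) = supportCone Q (exposedFace Q (-w)) := by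
  obtain ⟨⟨t, ht⟩, hc⟩ := h1.symm
  obtain ⟨⟨s, hs⟩, hc'⟩ := h2.symm
  have e : D P w = {t + s} + D Q w := by
    unfold D
    rw [ht, hs, ← Set.singleton_add_singleton]
    exact add_add_add_comm _ _ _ _
  have h0 : t + s = 0 := translate_zero (D_compact hQ w) (D_nonempty hQ hn w) (hD ▸ e)
  have hs' : s = -t := (neg_eq_of_add_eq_zero_right h0).symm
  refine ⟨t, by rw [ht, Set.singleton_add], hc.symm, ?_, ?_⟩
  · rw [exposedFace_neg, exposedFace_neg, hs'] at hs
    have := congrArg (fun X : Set E3 => -X) hs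
    rw [← Set.singleton_add]
    simpa only [neg_add, neg_neg, Set.neg_singleton] using this
  · rw [exposedFace_neg, exposedFace_neg, supportCone_neg, supportCone_neg] at hc'
    exact (neg_injective hc').symm

end Synis

/-- If `(P, −P)` and `(P', −P')` are synisothetic, then for each unit `w` there are
`σ ∈ {−1, 1}` and `x ∈ ℝ³` such that `P_w = (σP')_w + x`,
`cone(P, P_w) = cone(σP', (σP')_w)`, and the same holds with `w` replaced by `−w`
(with the same `σ` and `x`). -/
theorem synisothetic_faces_match_in_antipodal_directions
    (P P' : Set (EuclideanSpace ℝ (Fin 3)))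
    (hP : IsPolytope P) (hP' : IsPolytope P')
    (hPint : (interior P).Nonempty) (hP'int : (interior P').Nonempty)
    (hsyn : Synisothetic P (-P) P' (-P')) :
    ∀ w : EuclideanSpace ℝ (Fin 3), ‖w‖ = 1 →
      ∃ σ : ℝ, (σ = 1 ∨ σ = -1) ∧
        ∃ x : EuclideanSpace ℝ (Fin 3),
          exposedFace P w = (x + ·) '' exposedFace (σ • P') w ∧
          supportCone P (exposedFace P w) = supportCone (σ • P') (exposedFace (σ • P') w) ∧
          exposedFace P (-w) = (x + ·) '' exposedFace (σ • P') (-w) ∧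
          supportCone P (exposedFace P (-w)) =
            supportCone (σ • P') (exposedFace (σ • P') (-w)) := by
  intro w hw
  have hn : P.Nonempty := hPint.mono interior_subset
  have hn' : P'.Nonempty := hP'int.mono interior_subset
  have hcases := Synis.rel_cases hP hP' hn hn' hsyn
  have hD : Synis.D P w = Synis.D P' w := by
    refine Synis.D_eq hP hP' hn hn' (fun u hu => ?_) w hw
    rcases hcases u hu with ⟨h1, h2⟩ | ⟨h1, h2⟩
    · obtain ⟨⟨t, ht⟩, -⟩ := h1.symm
      obtain ⟨⟨s, hs⟩, -⟩ := h2.symm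
      refine ⟨t + s, ?_⟩
      unfold Synis.D
      rw [ht, hs, ← Set.singleton_add_singleton]
      exact add_add_add_comm _ _ _ _
    · obtain ⟨⟨t, ht⟩, -⟩ := h1.symm
      obtain ⟨⟨s, hs⟩, -⟩ := h2.symm
      refine ⟨t + s, ?_⟩
      unfold Synis.D
      rw [ht, hs, ← Set.singleton_add_singleton,
        add_comm (exposedFace P' u) (exposedFace (-P') u)]
      exact add_add_add_comm _ _ _ _
  rcases hcases w hw with ⟨h1, h2⟩ | ⟨h1, h2⟩
  · refine ⟨1, Or.inl rfl, ?_⟩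
    rw [one_smul]
    exact Synis.final hP' hn' w hD h1 h2
  · refine ⟨-1, Or.inr rfl, ?_⟩
    have e : (-1 : ℝ) • P' = -P' := by
      ext x
      rw [Set.mem_smul_set_iff_inv_smul_mem₀ (by norm_num)]
      norm_num
    rw [e]
    refine Synis.final (Synis.polytope_neg hP') hn'.neg w ?_ h1 (by rwa [neg_neg])
    rw [hD]
    unfold Synis.D
    rw [neg_neg, add_comm]
end
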